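/- arXiv:0801.0939 — 2 statements merged into one kernel-verified Lean document; each statement's English description precedes it below -/
import Mathlib

section
/- Let P be a convex polytope of dimension d ≥ 4, let E be a set of edges of P with |E| ≤ 2d-3, and let f, g be edges of P not in E. Then there exists a walk (v_0, e_1, v_1, …, e_n, v_n) in the graph G(P) such that v_0 is an endpoint of f, v_n is an endpoint of g, each vertex v_i is an endpoint of at most d-2 edges in E, and for each i with e_i ∈ E, at most d-1 edges in E have at least one common endpoint with e_i. -/
open Set

/-- A convex polytope in `ℝ^N`: the convex hull of a finite set of points. -/
def IsPolytope {N : ℕ} (P : Set (EuclideanSpace ℝ (Fin N))) : Prop :=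
  ∃ S : Set (EuclideanSpace ℝ (Fin N)), S.Finite ∧ P = convexHull ℝ S

/-- The dimension of a subset of `ℝ^N`: the dimension of its affine hull. -/
noncomputable def sdim {N : ℕ} (P : Set (EuclideanSpace ℝ (Fin N))) : ℕ :=
  Module.finrank ℝ (affineSpan ℝ P).direction

/-- `F` is a face of `P` of dimension `k`: a nonempty exposed subset of `P`
(the set of minimizers over `P` of some linear functional) of dimension `k`. -/
def IsFaceDim {N : ℕ} (P F : Set (EuclideanSpace ℝ (Fin N))) (k : ℕ) : Prop :=
  IsExposed ℝ P F ∧ F.Nonempty ∧ sdim F = k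

/-- The graph `G_k(P)` on the `k`-dimensional faces of `P`: two such faces
are adjacent if some `(k+1)`-dimensional face of `P` contains both. -/
def faceGraph {N : ℕ} (P : Set (EuclideanSpace ℝ (Fin N))) (k : ℕ) :
    SimpleGraph {F : Set (EuclideanSpace ℝ (Fin N)) // IsFaceDim P F k} :=
  SimpleGraph.fromRel (fun F F' => ∃ G, IsFaceDim P G (k + 1) ∧ F.1 ⊆ G ∧ F'.1 ⊆ G)

/-- A graph is `m`-connected if it has at least `m+1` nodes and deleting any set
of at most `m-1` nodes (and incident edges) leaves a connected graph. -/
def MConnected {V : Type*} (G : SimpleGraph V) (m : ℕ) : Prop :=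
  m + 1 ≤ Nat.card V ∧
    ∀ S : Set V, S.Finite → S.ncard < m → (G.induce Sᶜ).Connected

/-!
Regard `E` as a subgraph `H` of the graph `G` of `P`, and call a vertex good if at most `d - 2`
edges of `H` contain it. Two vertices that are not good and not adjacent in `H` would need
`2d - 2` edges, so `f` and `g` have good endpoints. These have to be joined by edges of `G` that
are admissible in the sense of `safeGraph`.

The graph `G` is `d`-connected (Balinski's theorem): for fewer than `d` deleted vertices and a
further vertex `a` there is a nonconstant functional with the same value on all of them, and the
steps of the simplex method, which follow edges of `P` that increase the functional, avoid the
deleted vertices. If some vertex is not good, then at most two are, and deleting them leaves so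
few edges of `H` that these can be deleted too without disconnecting `G`. If all vertices are
good, take a cut of `G` without admissible edges. Every edge across it lies in `H` and has degree
sum greater than `d`; by `d`-connectedness both sides of the cut then have degree sum at least
`2d - 2`, whereas the sum of all degrees is at most `4d - 6`.
-/

section Connectivity

variable {V : Type*} {G : SimpleGraph V} {d : ℕ}

theorem MConnected.exists_notMem (hG : MConnected G d) {S : Set V} (hS : S.ncard ≤ d) :
    ∃ v, v ∉ S := by
  by_contra! h
  have hcard := hG.1
  rw [← ncard_univ, ← eq_univ_of_forall h] at hcard
  omega

theorem MConnected.exists_adj_of_ncard_lt (hG : MConnected G d) {S A : Set V} (hS : S.Finite)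
    (hSd : S.ncard < d) {a b : V} (haS : a ∉ S) (haA : a ∈ A) (hbS : b ∉ S) (hbA : b ∉ A) :
    ∃ x ∉ S, ∃ y ∉ S, x ∈ A ∧ y ∉ A ∧ G.Adj x y := by
  obtain ⟨p⟩ := (hG.2 S hS hSd).preconnected ⟨a, haS⟩ ⟨b, hbS⟩
  obtain ⟨e, -, hfst, hsnd⟩ := p.exists_boundary_dart (Subtype.val ⁻¹' A) haA hbA
  exact ⟨_, e.fst.2, _, e.snd.2, hfst, hsnd, e.adj⟩

theorem ncard_neighborSet_eq_degree (v : V) [Fintype (G.neighborSet v)] :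
    (G.neighborSet v).ncard = G.degree v := by
  rw [← Nat.card_coe_set_eq, Nat.card_eq_fintype_card, G.card_neighborSet_eq_degree]

theorem MConnected.le_degree (hG : MConnected G d) (v : V) [Fintype (G.neighborSet v)] :
    d ≤ G.degree v := by
  rw [← ncard_neighborSet_eq_degree]
  by_contra! hlt
  obtain ⟨b, hb⟩ := hG.exists_notMem ((ncard_insert_le v (G.neighborSet v)).trans hlt)
  rw [mem_insert_iff, not_or] at hb
  obtain ⟨x, -, y, hy, rfl, -, hxy⟩ := hG.exists_adj_of_ncard_lt (toFinite _) hlt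
    G.notMem_neighborSet_self (mem_singleton v) hb.2 hb.1
  exact hy hxy

/- If `xy` were the only crossing edge avoiding `S` and `C`, then no edge avoiding `C` would cross
after deleting `x` or `y` instead of the edge `xy`, so no vertex other than `x` and `y` would be
outside `S`. -/
theorem MConnected.exists_adj_notMem_of_ncard_add_card_lt [Finite V] (hG : MConnected G d)
    (C : Finset (Sym2 V)) {S A : Set V} (hSC : S.ncard + C.card < d) {a b : V}
    (haS : a ∉ S) (haA : a ∈ A) (hbS : b ∉ S) (hbA : b ∉ A) :
    ∃ x ∉ S, ∃ y ∉ S, x ∈ A ∧ y ∉ A ∧ G.Adj x y ∧ s(x, y) ∉ C := by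
  classical
  induction C using Finset.induction_on generalizing S a b with
  | empty => simpa using hG.exists_adj_of_ncard_lt S.toFinite (by simpa using hSC) haS haA hbS hbA
  | insert e C heC ih =>
    rw [Finset.card_insert_of_notMem heC] at hSC
    by_contra! hcut
    have eq_of_crossing {p q : V} (hp : p ∉ S) (hq : q ∉ S) (hpA : p ∈ A) (hqA : q ∉ A)
        (hpq : G.Adj p q) (hC : s(p, q) ∉ C) : s(p, q) = e :=
      (Finset.mem_insert.1 (hcut p hp q hq hpA hqA hpq)).resolve_right hC
    obtain ⟨x, hxS, y, hyS, hxA, hyA, hxy, hxyC⟩ := ih (by omega) haS haA hbS hbA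
    obtain rfl := eq_of_crossing hxS hyS hxA hyA hxy hxyC
    have no_cut {v a b : V} (hv : v ∈ s(x, y)) (ha : a ∉ insert v S) (haA : a ∈ A)
        (hb : b ∉ insert v S) (hbA : b ∉ A) : False := by
      have := S.ncard_insert_le v
      obtain ⟨p, hp, q, hq, hpA, hqA, hpq, hC⟩ := ih (by omega) ha haA hb hbA
      rw [mem_insert_iff, not_or] at hp hq
      rw [← eq_of_crossing hp.2 hq.2 hpA hqA hpq hC, Sym2.mem_iff] at hv
      exact hv.elim (Ne.symm hp.1) (Ne.symm hq.1)
    obtain ⟨z, hz⟩ := hG.exists_notMem (S := insert x (insert y S)) <| by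
      have := ncard_insert_le x (insert y S)
      have := ncard_insert_le y S
      omega
    simp only [mem_insert_iff, not_or] at hz
    obtain ⟨hzx, hzy, hzS⟩ := hz
    by_cases hzA : z ∈ A
    · exact no_cut (Sym2.mem_mk_left x y) (by simp [hzx, hzS]) hzA (by simp [hyS, hxy.ne']) hyA
    · exact no_cut (Sym2.mem_mk_right x y) (by simp [hxS, hxy.ne]) hxA (by simp [hzy, hzS]) hzA

end Connectivity

section DegreeSums

variable {V : Type*} [Fintype V] (H : SimpleGraph V) [DecidableRel H.Adj]

theorem degree_le_degree_deleteIncidenceSet_add_one [DecidableEq V] {u v : V}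
    (huv : v ≠ u) :
    H.degree v ≤ (H.deleteIncidenceSet u).degree v + 1 := by
  rw [← H.card_neighborFinset_eq_degree, ← SimpleGraph.card_neighborFinset_eq_degree]
  refine (Finset.card_le_card fun x hx => ?_).trans (Finset.card_insert_le u _)
  rw [SimpleGraph.mem_neighborFinset] at hx
  by_cases hxu : x = u
  · simp [hxu]
  · simp [SimpleGraph.deleteIncidenceSet_adj, hx, huv, hxu]

theorem degree_add_degree_le_card_edgeFinset {u v : V} (huv : u ≠ v) (h : ¬ H.Adj u v) :
    H.degree u + H.degree v ≤ H.edgeFinset.card := by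
  classical
  rw [← H.card_incidenceFinset_eq_degree, ← H.card_incidenceFinset_eq_degree,
    ← Finset.card_union_of_disjoint]
  · exact Finset.card_le_card (Finset.union_subset (H.incidenceFinset_subset u)
      (H.incidenceFinset_subset v))
  · rw [← Finset.disjoint_coe, SimpleGraph.coe_incidenceFinset, SimpleGraph.coe_incidenceFinset,
      disjoint_iff_inter_eq_empty]
    exact H.incidenceSet_inter_incidenceSet_of_not_adj h huv

end DegreeSums

section SafeGraph

variable {V : Type*} [Fintype V] {G H : SimpleGraph V} [DecidableRel H.Adj] {d : ℕ}

/-- The admissible steps of the walk: edges of `G` whose endpoints have degree at most `d - 2` in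
`H` and which, if they belong to `H`, meet at most `d - 1` edges of `H` (themselves included, so
that an edge `xy` of `H` meets `H.degree x + H.degree y - 1` of them). -/
def safeGraph (G H : SimpleGraph V) [DecidableRel H.Adj] (d : ℕ) : SimpleGraph V where
  Adj x y := G.Adj x y ∧ H.degree x + 2 ≤ d ∧ H.degree y + 2 ≤ d ∧
    (H.Adj x y → H.degree x + H.degree y ≤ d)
  symm := ⟨fun x y ⟨hxy, hx, hy, h⟩ => ⟨hxy.symm, hy, hx, fun hyx => by
    rw [add_comm]; exact h hyx.symm⟩⟩
  loopless := ⟨fun _ hx => G.irrefl hx.1⟩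

theorem degree_add_two_le_of_reachable_safeGraph {x y : V} (h : (safeGraph G H d).Reachable x y)
    (hx : H.degree x + 2 ≤ d) : H.degree y + 2 ≤ d := by
  obtain ⟨p⟩ := h
  induction p with
  | nil => exact hx
  | cons hadj _ ih => exact ih hadj.2.2.1

theorem reachable_safeGraph_of_ncard_add_card_lt (hG : MConnected G d) {S : Set V}
    (hS : ∀ v ∉ S, H.degree v + 2 ≤ d) {C : Finset (Sym2 V)}
    (hC : ∀ u ∉ S, ∀ v ∉ S, H.Adj u v → s(u, v) ∈ C) (hcard : S.ncard + C.card < d)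
    {x y : V} (hx : x ∉ S) (hy : y ∉ S) : (safeGraph G H d).Reachable x y := by
  by_contra hxy
  obtain ⟨p, hp, q, hq, hxp, hxq, hpq, hpqC⟩ := hG.exists_adj_notMem_of_ncard_add_card_lt
    C hcard (A := {z | (safeGraph G H d).Reachable x z}) hx (.refl x) hy hxy
  have hsafe : (safeGraph G H d).Adj p q :=
    ⟨hpq, hS p hp, hS q hq, fun h => (hpqC (hC p hp q hq h)).elim⟩
  exact hxq (hxp.trans hsafe.reachable)

theorem reachable_safeGraph_of_lt_degree_add_two (hd : 4 ≤ d) (hG : MConnected G d)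
    (hcard : H.edgeFinset.card ≤ 2 * d - 3) {u : V} (hu : d < H.degree u + 2) {x y : V}
    (hx : H.degree x + 2 ≤ d) (hy : H.degree y + 2 ≤ d) : (safeGraph G H d).Reachable x y := by
  classical
  have ne_of_good {a b : V} (ha : H.degree a + 2 ≤ d) (hb : d < H.degree b + 2) : a ≠ b := by
    rintro rfl
    omega
  have hcard_u := H.card_edgeFinset_deleteIncidenceSet u
  by_cases hother : ∀ v ≠ u, H.degree v + 2 ≤ d
  · refine reachable_safeGraph_of_ncard_add_card_lt hG (S := {u})
      (C := (H.deleteIncidenceSet u).edgeFinset) hother (fun a ha b hb hab => ?_) ?_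
      (ne_of_good hx hu) (ne_of_good hy hu)
    · exact SimpleGraph.mem_edgeFinset.2 (SimpleGraph.deleteIncidenceSet_adj.2 ⟨hab, ha, hb⟩)
    · rw [ncard_singleton]
      omega
  push Not at hother
  obtain ⟨w, hwu, hw⟩ := hother
  have hdeg_w := degree_le_degree_deleteIncidenceSet_add_one H hwu
  have hcard_uw := (H.deleteIncidenceSet u).card_edgeFinset_deleteIncidenceSet w
  have hempty : ((H.deleteIncidenceSet u).deleteIncidenceSet w).edgeFinset = ∅ :=
    Finset.card_eq_zero.1 (by omega)
  have hnadj {a b : V} (ha : a ∉ ({u, w} : Set V)) (hb : b ∉ ({u, w} : Set V)) :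
      ¬ H.Adj a b := fun hab => by
    simp only [mem_insert_iff, mem_singleton_iff, not_or] at ha hb
    refine Finset.notMem_empty s(a, b) (hempty ▸ SimpleGraph.mem_edgeFinset.2 ?_)
    simp [SimpleGraph.deleteIncidenceSet_adj, *]
  refine reachable_safeGraph_of_ncard_add_card_lt hG (S := {u, w}) (C := ∅) (fun v hv => ?_)
    (fun a ha b hb hab => (hnadj ha hb hab).elim) ?_ ?_ ?_
  · have hsub : H.neighborFinset v ⊆ {u, w} := fun z hz => by
      by_contra hzuw
      exact hnadj hv (by simpa using hzuw) ((H.mem_neighborFinset v z).1 hz)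
    have := (Finset.card_le_card hsub).trans Finset.card_le_two
    rw [H.card_neighborFinset_eq_degree] at this
    omega
  · rw [ncard_pair hwu.symm, Finset.card_empty]
    omega
  · simp [ne_of_good hx hu, ne_of_good hx hw]
  · simp [ne_of_good hy hu, ne_of_good hy hw]

/- At least `d` vertices of `A` have degree at least `3`: otherwise delete them, and a crossing edge
with an endpoint of degree at most `2` in `A` has degree sum at most `2 + (d - 2)`. -/
theorem two_mul_le_sum_degree_of_le_card (hd : 4 ≤ d) (hG : MConnected G d)
    (hgood : ∀ v, H.degree v + 2 ≤ d) {A : Finset V} (hA : d ≤ A.card) {b : V} (hb : b ∉ A)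
    (hcut : ∀ x ∈ A, ∀ y ∉ A, G.Adj x y → d < H.degree x + H.degree y) :
    2 * d ≤ ∑ x ∈ A, H.degree x + 2 := by
  let T := A.filter (3 ≤ H.degree ·)
  have hT : d ≤ T.card := by
    by_contra! hlt
    obtain ⟨a, haA, haT⟩ := Finset.exists_mem_notMem_of_card_lt_card (hlt.trans_le hA)
    obtain ⟨x, hxT, y, -, hxA, hyA, hxy⟩ := hG.exists_adj_of_ncard_lt (S := T) (A := A)
      T.finite_toSet (by rwa [ncard_coe_finset]) haT haA (fun h => hb (Finset.mem_filter.1 h).1) hb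
    have hx : ¬ 3 ≤ H.degree x := fun h => hxT (Finset.mem_filter.2 ⟨hxA, h⟩)
    have := hcut x hxA y hyA hxy
    have := hgood y
    omega
  calc 2 * d ≤ T.card * 3 := by omega
    _ ≤ ∑ x ∈ T, H.degree x :=
      T.card_nsmul_le_sum (fun x => H.degree x) 3 fun x hx => (Finset.mem_filter.1 hx).2
    _ ≤ ∑ x ∈ A, H.degree x := Finset.sum_le_sum_of_subset (A.filter_subset _)
    _ ≤ ∑ x ∈ A, H.degree x + 2 := Nat.le_add_right _ _

theorem two_mul_le_sum_degree_of_card_lt (hG : MConnected G d)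
    (hgood : ∀ v, H.degree v + 2 ≤ d) {A : Finset V} (hA : A.card < d) (hne : A.Nonempty)
    (hcut : ∀ x ∈ A, ∀ y ∉ A, G.Adj x y → H.Adj x y) :
    2 * d ≤ ∑ x ∈ A, H.degree x + 2 := by
  classical
  have hdeg (x) (hx : x ∈ A) : d + 1 - A.card ≤ H.degree x := by
    have hsub : G.neighborFinset x ⊆ H.neighborFinset x ∪ A.erase x := fun y hy => by
      rw [SimpleGraph.mem_neighborFinset] at hy
      rw [Finset.mem_union, SimpleGraph.mem_neighborFinset, Finset.mem_erase]
      exact (em (y ∈ A)).elim (fun hyA => .inr ⟨hy.ne', hyA⟩) fun hyA => .inl (hcut x hx y hyA hy)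
    have hcard := (Finset.card_le_card hsub).trans (Finset.card_union_le _ _)
    rw [Finset.card_erase_of_mem hx, G.card_neighborFinset_eq_degree,
      H.card_neighborFinset_eq_degree] at hcard
    have := hG.le_degree x
    have := Finset.card_pos.2 hne
    omega
  obtain ⟨k, hk⟩ := Nat.exists_eq_add_of_lt hA
  have hthree : 3 ≤ A.card := by
    obtain ⟨x, hx⟩ := hne
    have := hdeg x hx
    have := hgood x
    omega
  calc 2 * d ≤ A.card * (d + 1 - A.card) + 2 := by
        rw [show d + 1 - A.card = k + 2 by omega, hk]
        nlinarith
    _ ≤ ∑ x ∈ A, H.degree x + 2 :=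
      Nat.add_le_add_right (A.card_nsmul_le_sum (fun x => H.degree x) _ hdeg) 2

/- If not, both sides of the cut formed by a component have degree sum at least `2d - 2`. -/
theorem reachable_safeGraph_of_forall_degree_add_two_le (hd : 4 ≤ d) (hG : MConnected G d)
    (hcard : H.edgeFinset.card ≤ 2 * d - 3) (hgood : ∀ v, H.degree v + 2 ≤ d) (x y : V) :
    (safeGraph G H d).Reachable x y := by
  classical
  by_contra hxy
  let A : Finset V := {z | (safeGraph G H d).Reachable x z}
  have hxA : x ∈ A := by simp [A]
  have hyA : y ∉ A := by simpa [A] using hxy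
  have hcut {a b : V} (ha : a ∈ A) (hb : b ∉ A) (hab : G.Adj a b) :
      H.Adj a b ∧ d < H.degree a + H.degree b := by
    simp only [A, Finset.mem_filter_univ] at ha hb
    by_contra! h
    have hsafe : (safeGraph G H d).Adj a b := ⟨hab, hgood a, hgood b, h⟩
    exact hb (ha.trans hsafe.reachable)
  have side (B : Finset V) {a b : V} (ha : a ∈ B) (hb : b ∉ B)
      (hB : ∀ x ∈ B, ∀ y ∉ B, G.Adj x y → H.Adj x y ∧ d < H.degree x + H.degree y) :
      2 * d ≤ ∑ x ∈ B, H.degree x + 2 :=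
    (le_or_gt d B.card).elim
      (fun h => two_mul_le_sum_degree_of_le_card hd hG hgood h hb
        fun x hx y hy hxy => (hB x hx y hy hxy).2)
      (fun h => two_mul_le_sum_degree_of_card_lt hG hgood h ⟨a, ha⟩
        fun x hx y hy hxy => (hB x hx y hy hxy).1)
  have hle := side A hxA hyA fun a ha b hb hab => hcut ha hb hab
  have hle' := side Aᶜ (Finset.mem_compl.2 hyA) (Finset.notMem_compl.2 hxA) fun a ha b hb hab => by
    rw [H.adj_comm, add_comm]
    exact hcut (Finset.notMem_compl.1 hb) (Finset.mem_compl.1 ha) hab.symm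
  have hsum := Finset.sum_add_sum_compl A (fun x => H.degree x)
  rw [H.sum_degrees_eq_twice_card_edges] at hsum
  omega

theorem reachable_safeGraph (hd : 4 ≤ d) (hG : MConnected G d)
    (hcard : H.edgeFinset.card ≤ 2 * d - 3) {x y : V} (hx : H.degree x + 2 ≤ d)
    (hy : H.degree y + 2 ≤ d) : (safeGraph G H d).Reachable x y := by
  by_cases hgood : ∀ v, H.degree v + 2 ≤ d
  · exact reachable_safeGraph_of_forall_degree_add_two_le hd hG hcard hgood x y
  · push Not at hgood
    obtain ⟨u, hu⟩ := hgood
    exact reachable_safeGraph_of_lt_degree_add_two hd hG hcard hu hx hy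

end SafeGraph

open Filter Topology in
theorem exists_pos_forall_add_mul_lt {ι : Type*} [Finite ι] (a b : ι → ℝ) :
    ∃ ε > 0, ∀ i j, a i < a j → a i + ε * b i < a j + ε * b j := by
  have hev : ∀ᶠ ε in 𝓝[>] (0 : ℝ), ∀ i j, a i < a j → a i + ε * b i < a j + ε * b j := by
    refine eventually_all.2 fun i => eventually_all.2 fun j => ?_
    by_cases hij : a i < a j
    · have hlim (k) : Tendsto (fun ε : ℝ => a k + ε * b k) (𝓝[>] 0) (𝓝 (a k)) :=
        ((Continuous.tendsto' (by fun_prop) 0 (a k) (by simp)).mono_left nhdsWithin_le_nhds)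
      exact ((hlim i).eventually_lt (hlim j) hij).mono fun _ h _ => h
    · exact Eventually.of_forall fun _ h => (hij h).elim
  obtain ⟨ε, hε, hpos⟩ := (hev.and self_mem_nhdsWithin).exists
  exact ⟨ε, hpos, hε⟩

theorem reachable_of_forall_exists_adj_lt {V α : Type*} [Finite V] [Preorder α]
    {G : SimpleGraph V} {f : V → α} {p : V → Prop} {m : V}
    (h : ∀ x, p x → x ≠ m → ∃ y, p y ∧ f x < f y ∧ G.Adj x y) {x : V} (hx : p x) :
    G.Reachable x m := by
  by_contra hxm
  obtain ⟨y, ⟨hy, hym⟩, hmax⟩ := (toFinite {y | p y ∧ ¬ G.Reachable y m}).exists_maximalFor f _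
    ⟨x, hx, hxm⟩
  obtain ⟨z, hz, hlt, hadj⟩ := h y hy fun h => hym (h ▸ .refl _)
  have hzm : ¬ G.Reachable z m := fun h => hym (hadj.reachable.trans h)
  exact hlt.not_ge (hmax ⟨hz, hzm⟩ hlt.le)

theorem finrank_vectorSpan_add_one_le_ncard {k V P : Type*} [DivisionRing k] [AddCommGroup V]
    [Module k V] [AddTorsor V P] {S : Set P} (hS : S.Finite) (hne : S.Nonempty) :
    Module.finrank k (vectorSpan k S) + 1 ≤ S.ncard := by
  have := hS.fintype
  obtain ⟨n, hn⟩ := Nat.exists_eq_add_of_lt ((ncard_pos hS).2 hne)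
  rw [zero_add] at hn
  have hle := finrank_vectorSpan_range_le k ((↑) : S → P) (n := n)
    (by rw [← hn, ← Nat.card_coe_set_eq, Nat.card_eq_fintype_card])
  rw [Subtype.range_coe] at hle
  omega

section ConvexIndependent

variable {E : Type*} [AddCommGroup E] [Module ℝ E]

theorem eq_or_eq_of_mem_segment_of_convexIndependent {S : Set E}
    (hS : ConvexIndependent ℝ ((↑) : S → E)) {x y z : E} (hx : x ∈ S) (hy : y ∈ S) (hz : z ∈ S)
    (h : z ∈ segment ℝ x y) : z = x ∨ z = y := by
  rw [← convexHull_pair] at h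
  exact convexIndependent_set_iff_inter_convexHull_subset.1 hS _ (pair_subset hx hy) ⟨hz, h⟩

theorem eq_of_sameRay_sub_of_convexIndependent {S : Set E}
    (hS : ConvexIndependent ℝ ((↑) : S → E)) {x y z : E} (hx : x ∈ S) (hy : y ∈ S) (hz : z ∈ S)
    (hyx : y ≠ x) (hzx : z ≠ x) (h : SameRay ℝ (y - x) (z - x)) : y = z := by
  have eq_of_wbtw {a b : E} (ha : a ∈ S) (hb : b ∈ S) (hax : a ≠ x) (h : Wbtw ℝ x a b) : a = b :=
    (eq_or_eq_of_mem_segment_of_convexIndependent hS hx hb ha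
      (mem_segment_iff_wbtw.2 h)).resolve_left hax
  rcases wbtw_total_of_sameRay_vsub_left (P := E) h with h | h
  exacts [eq_of_wbtw hy hz hyx h, (eq_of_wbtw hz hy hzx h).symm]

end ConvexIndependent

section Polytope

variable {E : Type*} [AddCommGroup E] [Module ℝ E] [TopologicalSpace E]

/-- The point where the ray from `0` in direction `x - w` meets the hyperplane `l = -1`, for
`l x < l w`. If `l` exposes the vertex `w` of a polytope, the images of the other vertices span the
vertex figure at `w`, up to translation. -/
noncomputable def radialProj (l : StrongDual ℝ E) (w x : E) : E := (l w - l x)⁻¹ • (x - w)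

theorem sub_smul_radialProj {l : StrongDual ℝ E} {w x : E} (h : l x < l w) :
    (l w - l x) • radialProj l w x = x - w :=
  smul_inv_smul₀ (sub_pos.2 h).ne' _

theorem map_sub_map_eq_mul_map_radialProj {l : StrongDual ℝ E} {w x : E} (h : l x < l w)
    (φ : StrongDual ℝ E) : φ x - φ w = (l w - l x) * φ (radialProj l w x) := by
  rw [← map_sub, ← sub_smul_radialProj h, map_smul, smul_eq_mul]

theorem sameRay_sub_of_radialProj_eq {l : StrongDual ℝ E} {w x y : E} (hx : l x < l w)
    (hy : l y < l w) (h : radialProj l w x = radialProj l w y) : SameRay ℝ (x - w) (y - w) := by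
  rw [← sub_smul_radialProj hx, ← sub_smul_radialProj hy, h]
  exact (SameRay.sameRay_nonneg_smul_left _ (sub_pos.2 hx).le).nonneg_smul_right (sub_pos.2 hy).le

theorem exists_strongDual_eq_on_and_ne [T2Space E] [IsTopologicalAddGroup E]
    [ContinuousSMul ℝ E] [FiniteDimensional ℝ E] {S T : Set E} {a : E} (ha : a ∈ T)
    (h : Module.finrank ℝ (vectorSpan ℝ T) < Module.finrank ℝ (vectorSpan ℝ S)) :
    ∃ φ : StrongDual ℝ E, (∀ x ∈ T, φ x = φ a) ∧ ∃ v ∈ S, φ v ≠ φ a := by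
  obtain ⟨v, hv, hva⟩ : ∃ v ∈ S, v - a ∉ vectorSpan ℝ T := by
    by_contra! hsub
    refine h.not_ge (Submodule.finrank_mono ?_)
    rw [vectorSpan_def, Submodule.span_le]
    rintro _ ⟨x, hx, y, hy, rfl⟩
    simpa using sub_mem (hsub x hx) (hsub y hy)
  obtain ⟨φ, hφ, hker⟩ := Submodule.exists_le_ker_of_notMem hva
  refine ⟨φ.toContinuousLinearMap, fun x hx => ?_, v, hv, ?_⟩
  · exact sub_eq_zero.1 ((map_sub φ x a).symm.trans (hker (vsub_mem_vectorSpan ℝ hx ha)))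
  · simpa [sub_eq_zero] using hφ

variable [T2Space E] [IsTopologicalAddGroup E] [ContinuousSMul ℝ E] [LocallyConvexSpace ℝ E]
  {S F : Set E}

theorem convexHull_extremePoints_eq_of_finite {K : Set E} (hK : Convex ℝ K)
    (hcomp : IsCompact K) (hfin : (K.extremePoints ℝ).Finite) :
    convexHull ℝ (K.extremePoints ℝ) = K := by
  rw [← (hfin.isClosed_convexHull ℝ).closure_eq, closure_convexHull_extremePoints hcomp hK]

theorem convexHull_inter_eq_of_isExposed (hS : S.Finite) (hF : IsExposed ℝ (convexHull ℝ S) F) :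
    convexHull ℝ (F ∩ S) = F := by
  have hconv := hF.convex (convex_convexHull ℝ S)
  have hext : F.extremePoints ℝ ⊆ F ∩ S := by
    rw [hF.isExtreme.extremePoints_eq]
    exact inter_subset_inter_right F extremePoints_convexHull_subset
  refine (convexHull_min inter_subset_left hconv).antisymm ?_
  calc F = convexHull ℝ (F.extremePoints ℝ) := (convexHull_extremePoints_eq_of_finite hconv
        (hF.isCompact (hS.isCompact_convexHull ℝ)) ((hS.inter_of_right F).subset hext)).symm
    _ ⊆ convexHull ℝ (F ∩ S) := convexHull_mono hext

theorem isExposed_convexHull_setOf_eq (hS : S.Finite) {v : E} (hv : v ∈ S)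
    {l : StrongDual ℝ E} (hl : ∀ x ∈ S, l x ≤ l v) :
    IsExposed ℝ (convexHull ℝ S) (convexHull ℝ {x ∈ S | l x = l v}) := by
  have hle : ∀ x ∈ convexHull ℝ S, l x ≤ l v :=
    convexHull_min hl (convex_halfSpace_le l.isLinear (l v))
  have hexp : IsExposed ℝ (convexHull ℝ S) (l.toExposed (convexHull ℝ S)) :=
    ContinuousLinearMap.toExposed.isExposed
  have hinter : l.toExposed (convexHull ℝ S) ∩ S = {x ∈ S | l x = l v} := by
    ext x
    refine ⟨fun hx => ⟨hx.2, (hl x hx.2).antisymm (hx.1.2 v (subset_convexHull ℝ S hv))⟩,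
      fun hx => ⟨⟨subset_convexHull ℝ S hx.1, fun y hy => hx.2 ▸ hle y hy⟩, hx.1⟩⟩
  rw [← hinter, convexHull_inter_eq_of_isExposed hS hexp]
  exact hexp

theorem exists_forall_lt_of_notMem_convexHull (hS : S.Finite) {v : E}
    (hv : v ∉ convexHull ℝ S) : ∃ l : StrongDual ℝ E, ∀ x ∈ S, l x < l v := by
  obtain ⟨l, u, hlu, huv⟩ := geometric_hahn_banach_closed_point (convex_convexHull ℝ S)
    (hS.isClosed_convexHull ℝ) hv
  exact ⟨l, fun x hx => (hlu x (subset_convexHull ℝ S hx)).trans huv⟩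

theorem exists_isMaxOn_forall_lt (hF : F.Finite) (hne : F.Nonempty) (φ : StrongDual ℝ E) :
    ∃ y ∈ F, IsMaxOn φ F y ∧ ∃ ψ : StrongDual ℝ E, ∀ x ∈ F, x ≠ y → ψ x < ψ y := by
  have hcomp := hF.isCompact_convexHull ℝ
  have hexp : IsExposed ℝ (convexHull ℝ F) (φ.toExposed (convexHull ℝ F)) :=
    ContinuousLinearMap.toExposed.isExposed
  obtain ⟨y₀, hy₀, hmax⟩ := hcomp.exists_isMaxOn hne.convexHull φ.continuous.continuousOn
  obtain ⟨y, hy⟩ := (hexp.isCompact hcomp).extremePoints_nonempty ⟨y₀, hy₀, hmax⟩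
  have hyext := hexp.isExtreme.extremePoints_subset_extremePoints hy
  have hyF := extremePoints_convexHull_subset hyext
  have hynot : y ∉ convexHull ℝ (F \ {y}) := fun h =>
    ((convex_convexHull ℝ F).mem_extremePoints_iff_mem_sdiff_convexHull_sdiff.1 hyext).2
      (convexHull_mono (sdiff_subset_sdiff_left (subset_convexHull ℝ F)) h)
  obtain ⟨ψ, hψ⟩ := exists_forall_lt_of_notMem_convexHull (hF.sdiff (t := {y})) hynot
  exact ⟨y, hyF, fun x hx => hy.1.2 x (subset_convexHull ℝ F hx), ψ, fun x hx hxy => hψ x ⟨hx, hxy⟩⟩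

theorem exists_forall_lt_of_convexIndependent (hS : S.Finite)
    (hind : ConvexIndependent ℝ ((↑) : S → E)) {v : E} (hv : v ∈ S) :
    ∃ l : StrongDual ℝ E, ∀ x ∈ S, x ≠ v → l x < l v := by
  obtain ⟨l, hl⟩ := exists_forall_lt_of_notMem_convexHull (hS.sdiff (t := {v}))
    (convexIndependent_set_iff_notMem_convexHull_sdiff.1 hind v hv)
  exact ⟨l, fun x hx hxv => hl x ⟨hx, hxv⟩⟩

/- A step of the simplex method: `w'` corresponds to a vertex of the vertex figure at `w` on which
`φ` is maximal, and `θ` exposes the edge from `w` to `w'`. -/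
theorem exists_functional_le_and_sameRay_of_lt (hS : S.Finite) {w v : E} (hv : v ∈ S)
    {l : StrongDual ℝ E} (hl : ∀ x ∈ S, x ≠ w → l x < l w) {φ : StrongDual ℝ E} (hφ : φ w < φ v) :
    ∃ w' ∈ S, φ w < φ w' ∧ ∃ θ : StrongDual ℝ E, θ w' = θ w ∧
      ∀ x ∈ S, θ x ≤ θ w ∧ (θ x = θ w → SameRay ℝ (x - w) (w' - w)) := by
  have hvw : v ∈ S \ {w} := ⟨hv, fun h : v = w => hφ.ne' (congrArg φ h)⟩
  obtain ⟨-, ⟨w', hw', rfl⟩, hmax, ψ, hψ⟩ := exists_isMaxOn_forall_lt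
    ((hS.sdiff (t := {w})).image (radialProj l w)) ⟨_, mem_image_of_mem _ hvw⟩ φ
  have hlv := hl v hvw.1 hvw.2
  have hlw' := hl w' hw'.1 hw'.2
  have hφw' : 0 < φ (radialProj l w w') := by
    refine lt_of_lt_of_le ?_ (hmax (mem_image_of_mem _ hvw))
    have hmul := map_sub_map_eq_mul_map_radialProj hlv φ ▸ sub_pos.2 hφ
    exact pos_of_mul_pos_right hmul (sub_pos.2 hlv).le
  let θ : StrongDual ℝ E := ψ + ψ (radialProj l w w') • l
  have hθ {x} (hx : l x < l w) :
      θ x - θ w = (l w - l x) * (ψ (radialProj l w x) - ψ (radialProj l w w')) := by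
    simp only [θ, add_apply, smul_apply, smul_eq_mul]
    linear_combination map_sub_map_eq_mul_map_radialProj hx ψ
  refine ⟨w', hw'.1, ?_, θ, ?_, fun x hx => ?_⟩
  · exact sub_pos.1
      (map_sub_map_eq_mul_map_radialProj hlw' φ ▸ mul_pos (sub_pos.2 hlw') hφw')
  · simpa [sub_eq_zero] using hθ hlw'
  rcases eq_or_ne x w with rfl | hxw
  · simp
  have hlx := hl x hx hxw
  rcases eq_or_ne (radialProj l w x) (radialProj l w w') with heq | hne
  · exact ⟨by simpa [heq, sub_eq_zero] using (hθ hlx).le,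
      fun _ => sameRay_sub_of_radialProj_eq hlx hlw' heq⟩
  · have hneg : θ x - θ w < 0 := hθ hlx ▸ mul_neg_of_pos_of_neg (sub_pos.2 hlx)
      (sub_neg.2 (hψ _ (mem_image_of_mem _ ⟨hx, hxw⟩) hne))
    exact ⟨(sub_neg.1 hneg).le, fun h => absurd h (sub_neg.1 hneg).ne⟩

theorem exists_isExposed_segment_of_lt (hS : S.Finite) (hind : ConvexIndependent ℝ ((↑) : S → E))
    {w v : E} (hw : w ∈ S) (hv : v ∈ S) {φ : StrongDual ℝ E} (hφ : φ w < φ v) :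
    ∃ w' ∈ S, φ w < φ w' ∧ IsExposed ℝ (convexHull ℝ S) (segment ℝ w w') := by
  obtain ⟨l, hl⟩ := exists_forall_lt_of_convexIndependent hS hind hw
  obtain ⟨w', hw', hlt, θ, hθ, hle⟩ := exists_functional_le_and_sameRay_of_lt hS hv hl hφ
  have hww' : w' ≠ w := fun h => hlt.ne' (congrArg φ h)
  have hface : {x ∈ S | θ x = θ w} = {w, w'} := by
    ext x
    constructor
    · rintro ⟨hx, hxθ⟩
      exact or_iff_not_imp_left.2 fun hxw => eq_of_sameRay_sub_of_convexIndependent hind hw hx hw'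
        hxw hww' ((hle x hx).2 hxθ)
    · rintro (rfl | rfl)
      exacts [⟨hw, rfl⟩, ⟨hw', hθ⟩]
  refine ⟨w', hw', hlt, ?_⟩
  rw [← convexHull_pair, ← hface]
  exact isExposed_convexHull_setOf_eq hS hw fun x hx => (hle x hx).1

/-- The graph on a set `S` of points in which two points are adjacent if the segment joining them
belongs to `𝓔`. With `S` the vertices and `𝓔` some of the edges of a polytope, it encodes `𝓔` as a
subgraph of the graph of the polytope. -/
def segmentGraph (S : Set E) (𝓔 : Set (Set E)) : SimpleGraph S where
  Adj x y := x ≠ y ∧ segment ℝ (x : E) y ∈ 𝓔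
  symm := ⟨fun x y h => ⟨h.1.symm, segment_symm ℝ (x : E) y ▸ h.2⟩⟩
  loopless := ⟨fun _ h => h.1 rfl⟩

/-- The graph of the polytope with vertex set `S`: the edges are the segments joining two vertices
that are exposed faces. -/
def polytopeGraph (S : Set E) : SimpleGraph S :=
  segmentGraph S {e | IsExposed ℝ (convexHull ℝ S) e}

theorem exists_polytopeGraph_adj_of_lt (hS : S.Finite)
    (hind : ConvexIndependent ℝ ((↑) : S → E)) {φ : StrongDual ℝ E} {w v : S} (hφ : φ w < φ v) :
    ∃ w' : S, φ w < φ w' ∧ (polytopeGraph S).Adj w w' := by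
  obtain ⟨w', hw', hlt, hexp⟩ := exists_isExposed_segment_of_lt hS hind w.2 v.2 hφ
  exact ⟨⟨w', hw'⟩, hlt, fun h => hlt.ne' (congrArg (fun x : S => φ x) h).symm, hexp⟩

/- `φ` is perturbed to a functional `ψ` with a unique maximum `m` on `S` and with
`φ x < φ y → ψ x < ψ y`, so that `ψ`-increasing walks never return to the hyperplane `φ = c`. -/
theorem exists_forall_reachable_of_lt (hS : S.Finite) (hind : ConvexIndependent ℝ ((↑) : S → E))
    {φ : StrongDual ℝ E} {c : ℝ} {T : Set S} (hT : ∀ x ∈ T, φ x = c) {v : S} (hv : c < φ v) :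
    ∃ m : (Tᶜ : Set S), ∀ x : (Tᶜ : Set S), c < φ x →
      ((polytopeGraph S).induce Tᶜ).Reachable x m := by
  have := hS.to_subtype
  have notMem {x : S} (hx : c < φ x) : x ∉ T := fun h => hx.ne' (hT x h)
  obtain ⟨m, hm, hmax, l, hl⟩ := exists_isMaxOn_forall_lt hS ⟨v, v.2⟩ φ
  obtain ⟨ε, hε, hpert⟩ := exists_pos_forall_add_mul_lt (fun x : S => φ x) (fun x : S => l x)
  let ψ : StrongDual ℝ E := φ + ε • l
  have hψm {x : S} (hx : (x : E) ≠ m) : ψ x < ψ (⟨m, hm⟩ : S) :=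
    add_lt_add_of_le_of_lt (hmax x.2) (mul_lt_mul_of_pos_left (hl x x.2 hx) hε)
  refine ⟨⟨⟨m, hm⟩, notMem (hv.trans_le (hmax v.2))⟩, fun x hx =>
    reachable_of_forall_exists_adj_lt (V := (Tᶜ : Set S)) (f := fun x => ψ (x : S))
      (p := fun x => c < φ (x : S)) (fun x hx hxm => ?_) hx⟩
  obtain ⟨y, hxy, hadj⟩ := exists_polytopeGraph_adj_of_lt hS hind
    (hψm fun h => hxm (Subtype.ext (Subtype.ext h)))
  have hy : c < φ y := hx.trans_le (le_of_not_gt fun h => hxy.not_gt (hpert y x h))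
  exact ⟨⟨y, notMem hy⟩, hy, hxy, hadj⟩

theorem reachable_induce_compl_of_le (hS : S.Finite) (hind : ConvexIndependent ℝ ((↑) : S → E))
    {φ : StrongDual ℝ E} {c : ℝ} {T : Set S} (hT : ∀ x ∈ T, φ x = c) {v : S} (hv : c < φ v)
    {x y : (Tᶜ : Set S)} (hx : c ≤ φ x) (hy : c ≤ φ y) :
    ((polytopeGraph S).induce Tᶜ).Reachable x y := by
  obtain ⟨m, hm⟩ := exists_forall_reachable_of_lt hS hind hT hv
  have reachable_m (z : (Tᶜ : Set S)) (hz : c ≤ φ z) :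
      ((polytopeGraph S).induce Tᶜ).Reachable z m := by
    obtain hlt | heq := hz.lt_or_eq
    · exact hm z hlt
    obtain ⟨w, hw, hadj⟩ := exists_polytopeGraph_adj_of_lt hS hind (heq ▸ hv)
    have hwT : w ∉ T := fun h => (heq.symm ▸ hw).ne' (hT w h)
    have hadj' : ((polytopeGraph S).induce Tᶜ).Adj z ⟨w, hwT⟩ := hadj
    exact hadj'.reachable.trans (hm ⟨w, hwT⟩ (heq ▸ hw))
  exact (reachable_m x hx).trans (reachable_m y hy).symm

theorem mConnected_polytopeGraph [FiniteDimensional ℝ E] (hS : S.Finite) (hne : S.Nonempty)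
    (hind : ConvexIndependent ℝ ((↑) : S → E)) :
    MConnected (polytopeGraph S) (Module.finrank ℝ (vectorSpan ℝ S)) := by
  have hcard := finrank_vectorSpan_add_one_le_ncard (k := ℝ) hS hne
  refine ⟨hcard, fun T hTfin hT => ?_⟩
  have hnonempty : Nonempty (Tᶜ : Set S) := by
    by_contra! hempty
    have huniv : T = univ := compl_empty_iff.1 (isEmpty_coe_sort.1 hempty)
    rw [huniv, ncard_univ, Nat.card_coe_set_eq] at hT
    omega
  refine ⟨fun a b => ?_⟩
  have hspan : Module.finrank ℝ (vectorSpan ℝ (Subtype.val '' insert (a : S) T)) <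
      Module.finrank ℝ (vectorSpan ℝ S) := by
    have hTa := hTfin.insert (a : S)
    have hle := finrank_vectorSpan_add_one_le_ncard (k := ℝ) (hTa.image Subtype.val)
      ((insert_nonempty _ _).image Subtype.val)
    have := ncard_image_le (f := Subtype.val) hTa
    have := ncard_insert_le (a : S) T
    omega
  obtain ⟨φ, hφ, u, hu, hua⟩ :=
    exists_strongDual_eq_on_and_ne (mem_image_of_mem Subtype.val (mem_insert (a : S) T)) hspan
  have hφT (x) (hx : x ∈ T) : φ x = φ (a : S) :=
    hφ x (mem_image_of_mem Subtype.val (mem_insert_of_mem _ hx))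
  obtain ⟨v, hva, hvb⟩ : ∃ v : S, φ v ≠ φ (a : S) ∧ (φ (b : S) = φ (a : S) ∨ v = b) :=
    (eq_or_ne (φ (b : S)) (φ (a : S))).elim (fun h => ⟨⟨u, hu⟩, hua, .inl h⟩)
      fun h => ⟨b, h, .inr rfl⟩
  rcases hva.lt_or_gt with hlt | hlt
  · have hb : φ (b : S) ≤ φ (a : S) := hvb.elim Eq.le (fun h => h ▸ hlt.le)
    exact reachable_induce_compl_of_le (φ := -φ) (c := -φ (a : S)) hS hind
      (fun x hx => congrArg Neg.neg (hφT x hx)) (neg_lt_neg hlt) le_rfl (neg_le_neg hb)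
  · have hb : φ (a : S) ≤ φ (b : S) := hvb.elim Eq.ge (fun h => h ▸ hlt.le)
    exact reachable_induce_compl_of_le hS hind hφT hlt le_rfl hb

end Polytope

section EdgeSets

variable {E : Type*} [AddCommGroup E] [Module ℝ E] {S : Set E} {𝓔 : Set (Set E)}

theorem card_edgeFinset_segmentGraph_le [Fintype S] [DecidableRel (segmentGraph S 𝓔).Adj]
    (hind : ConvexIndependent ℝ ((↑) : S → E)) (h𝓔 : 𝓔.Finite) :
    (segmentGraph S 𝓔).edgeFinset.card ≤ 𝓔.ncard := by
  let hull (z : Sym2 S) : Set E := convexHull ℝ ((↑) '' (z : Set S))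
  have mem_hull (x : S) (z : Sym2 S) : (x : E) ∈ hull z ↔ x ∈ z :=
    ⟨hind z x, fun hx => subset_convexHull ℝ _ (mem_image_of_mem _ hx)⟩
  rw [← ncard_coe_finset, SimpleGraph.coe_edgeFinset]
  refine ncard_le_ncard_of_injOn hull (fun z hz => ?_) (fun z _ w _ hzw => ?_) h𝓔
  · induction z with | h x y
    simpa [hull, image_pair, convexHull_pair] using hz.2
  · exact Sym2.ext fun x => by rw [← mem_hull, ← mem_hull, hzw]

theorem ncard_setOf_mem_le_degree_segmentGraph [Fintype S] [DecidableRel (segmentGraph S 𝓔).Adj]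
    (hind : ConvexIndependent ℝ ((↑) : S → E))
    (h𝓔 : ∀ e ∈ 𝓔, ∃ x y : S, x ≠ y ∧ e = segment ℝ (x : E) y) (v : S) :
    {e ∈ 𝓔 | ↑v ∈ e}.ncard ≤ (segmentGraph S 𝓔).degree v := by
  have hsub : {e ∈ 𝓔 | ↑v ∈ e} ⊆
      (fun w : S => segment ℝ (v : E) w) '' (segmentGraph S 𝓔).neighborSet v := by
    rintro e ⟨he, hv⟩
    obtain ⟨x, y, hxy, rfl⟩ := h𝓔 e he
    rcases eq_or_eq_of_mem_segment_of_convexIndependent hind x.2 y.2 v.2 hv with h | h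
    · obtain rfl := Subtype.ext h
      exact ⟨y, ⟨hxy, he⟩, rfl⟩
    · obtain rfl := Subtype.ext h
      rw [segment_symm] at he ⊢
      exact ⟨x, ⟨hxy.symm, he⟩, rfl⟩
  calc {e ∈ 𝓔 | ↑v ∈ e}.ncard ≤ ((segmentGraph S 𝓔).neighborSet v).ncard :=
        (ncard_le_ncard hsub).trans ncard_image_le
    _ = (segmentGraph S 𝓔).degree v := ncard_neighborSet_eq_degree v

theorem ncard_setOf_exists_mem_segment_lt [Fintype S] [DecidableRel (segmentGraph S 𝓔).Adj]
    (hind : ConvexIndependent ℝ ((↑) : S → E)) (hfin : 𝓔.Finite)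
    (h𝓔 : ∀ e ∈ 𝓔, ∃ x y : S, x ≠ y ∧ e = segment ℝ (x : E) y) {x y : S}
    (hxy : segment ℝ (x : E) y ∈ 𝓔) :
    {e ∈ 𝓔 | ∃ z ∈ S, z ∈ e ∧ z ∈ segment ℝ (x : E) y}.ncard <
      (segmentGraph S 𝓔).degree x + (segmentGraph S 𝓔).degree y := by
  have star_finite (v : E) : {e ∈ 𝓔 | v ∈ e}.Finite := hfin.subset (sep_subset _ _)
  have hsub : {e ∈ 𝓔 | ∃ z ∈ S, z ∈ e ∧ z ∈ segment ℝ (x : E) y} ⊆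
      {e ∈ 𝓔 | ↑x ∈ e} ∪ {e ∈ 𝓔 | ↑y ∈ e} := by
    rintro e ⟨he, z, hz, hze, hzxy⟩
    rcases eq_or_eq_of_mem_segment_of_convexIndependent hind x.2 y.2 hz hzxy with rfl | rfl
    exacts [.inl ⟨he, hze⟩, .inr ⟨he, hze⟩]
  have hinter : 0 < ({e ∈ 𝓔 | ↑x ∈ e} ∩ {e ∈ 𝓔 | ↑y ∈ e}).ncard :=
    (ncard_pos ((star_finite x).inter_of_left _)).2
      ⟨_, ⟨hxy, left_mem_segment ℝ _ _⟩, hxy, right_mem_segment ℝ _ _⟩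
  have hunion := ncard_union_add_ncard_inter _ _ (star_finite x) (star_finite y)
  have := ncard_le_ncard hsub ((star_finite x).union (star_finite y))
  have := ncard_setOf_mem_le_degree_segmentGraph hind h𝓔 x
  have := ncard_setOf_mem_le_degree_segmentGraph hind h𝓔 y
  omega

theorem degree_add_two_le_or_of_segment_notMem [Fintype S] [DecidableRel (segmentGraph S 𝓔).Adj]
    (hind : ConvexIndependent ℝ ((↑) : S → E)) (hfin : 𝓔.Finite) {d : ℕ} (hd : 2 ≤ d)
    (hcard : 𝓔.ncard ≤ 2 * d - 3) {x y : S} (hxy : x ≠ y) (h : segment ℝ (x : E) y ∉ 𝓔) :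
    (segmentGraph S 𝓔).degree x + 2 ≤ d ∨ (segmentGraph S 𝓔).degree y + 2 ≤ d := by
  have := degree_add_degree_le_card_edgeFinset (segmentGraph S 𝓔) hxy fun hadj => h hadj.2
  have := card_edgeFinset_segmentGraph_le hind hfin
  omega

end EdgeSets

theorem exists_ne_and_eq_pair_of_finrank_vectorSpan_eq_one {E : Type*} [AddCommGroup E]
    [Module ℝ E] {S : Set E} (hind : ConvexIndependent ℝ ((↑) : S → E))
    (h : Module.finrank ℝ (vectorSpan ℝ S) = 1) :
    ∃ x y, x ≠ y ∧ S = {x, y} := by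
  have : FiniteDimensional ℝ (vectorSpan ℝ S) := .of_finrank_pos (h ▸ one_pos)
  have hcol : Collinear ℝ S := collinear_iff_finrank_le_one.2 h.le
  have hnt : S.Nontrivial := by
    by_contra hsub
    rw [not_nontrivial_iff] at hsub
    rw [vectorSpan_of_subsingleton ℝ hsub, finrank_bot] at h
    exact zero_ne_one h
  obtain ⟨x, hx, y, hy, hxy⟩ := hnt
  refine ⟨x, y, hxy, (pair_subset hx hy).antisymm' fun z hz => ?_⟩
  have mem_ends {a b c : E} (ha : a ∈ S) (hb : b ∈ S) (hc : c ∈ S) (h : Wbtw ℝ a b c) :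
      b = a ∨ b = c :=
    eq_or_eq_of_mem_segment_of_convexIndependent hind ha hc hb (mem_segment_iff_wbtw.2 h)
  rcases (hcol.subset (insert_subset hx (pair_subset hy hz))).wbtw_or_wbtw_or_wbtw with h | h | h
  · exact .inr ((mem_ends hx hy hz h).resolve_left hxy.symm).symm
  · exact (mem_ends hy hz hx h).symm
  · exact .inl ((mem_ends hz hx hy h).resolve_right hxy).symm

section Faces

variable {N : ℕ} {P F : Set (EuclideanSpace ℝ (Fin N))}

theorem sdim_convexHull (S : Set (EuclideanSpace ℝ (Fin N))) :
    sdim (convexHull ℝ S) = Module.finrank ℝ (vectorSpan ℝ S) := by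
  rw [sdim, affineSpan_convexHull, direction_affineSpan]

theorem IsPolytope.convex (hP : IsPolytope P) : Convex ℝ P := by
  obtain ⟨S, -, rfl⟩ := hP
  exact convex_convexHull ℝ S

theorem IsPolytope.finite_extremePoints (hP : IsPolytope P) : (P.extremePoints ℝ).Finite := by
  obtain ⟨S, hS, rfl⟩ := hP
  exact hS.subset extremePoints_convexHull_subset

theorem IsPolytope.convexHull_extremePoints (hP : IsPolytope P) :
    convexHull ℝ (P.extremePoints ℝ) = P := by
  refine convexHull_extremePoints_eq_of_finite hP.convex ?_ hP.finite_extremePoints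
  obtain ⟨S, hS, rfl⟩ := hP
  exact hS.isCompact_convexHull ℝ

theorem IsPolytope.isFaceDim_singleton_iff (hP : IsPolytope P) {v : EuclideanSpace ℝ (Fin N)} :
    IsFaceDim P {v} 0 ↔ v ∈ P.extremePoints ℝ := by
  refine ⟨fun h => isExtreme_singleton.1 h.1.isExtreme, fun hv => ⟨?_, singleton_nonempty v, ?_⟩⟩
  · have hfin := hP.finite_extremePoints
    obtain ⟨l, hl⟩ := exists_forall_lt_of_convexIndependent hfin
      hP.convex.convexIndependent_extremePoints hv
    have hle (x) (hx : x ∈ P.extremePoints ℝ) : l x ≤ l v :=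
      (eq_or_ne x v).elim (fun h => h ▸ le_rfl) fun h => (hl x hx h).le
    have hface : {x ∈ P.extremePoints ℝ | l x = l v} = {v} := by
      ext x
      exact ⟨fun h => by_contra fun hxv => (hl x h.1 hxv).ne h.2, by rintro rfl; exact ⟨hv, rfl⟩⟩
    simpa only [hface, convexHull_singleton, hP.convexHull_extremePoints] using
      isExposed_convexHull_setOf_eq hfin hv hle
  · rw [← convexHull_singleton (𝕜 := ℝ), sdim_convexHull, vectorSpan_singleton, finrank_bot]

theorem isFaceDim_segment {x y : EuclideanSpace ℝ (Fin N)} (hxy : x ≠ y)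
    (h : IsExposed ℝ P (segment ℝ x y)) : IsFaceDim P (segment ℝ x y) 1 := by
  refine ⟨h, ⟨x, left_mem_segment ℝ x y⟩, ?_⟩
  rw [← convexHull_pair, sdim_convexHull, vectorSpan_pair]
  exact finrank_span_singleton (sub_ne_zero.2 hxy)

theorem IsPolytope.exists_eq_segment (hP : IsPolytope P) (hF : IsFaceDim P F 1) :
    ∃ x y : P.extremePoints ℝ, x ≠ y ∧ F = segment ℝ (x : EuclideanSpace ℝ (Fin N)) y := by
  have hhull : convexHull ℝ (F ∩ P.extremePoints ℝ) = F :=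
    convexHull_inter_eq_of_isExposed hP.finite_extremePoints
      (by rw [hP.convexHull_extremePoints]; exact hF.1)
  have hdim : Module.finrank ℝ (vectorSpan ℝ (F ∩ P.extremePoints ℝ)) = 1 := by
    rw [← sdim_convexHull, hhull, hF.2.2]
  obtain ⟨x, y, hxy, hpair⟩ := exists_ne_and_eq_pair_of_finrank_vectorSpan_eq_one
    (hP.convex.convexIndependent_extremePoints.mono inter_subset_right) hdim
  have hsub : {x, y} ⊆ P.extremePoints ℝ := hpair.symm.subset.trans inter_subset_right
  refine ⟨⟨x, hsub (mem_insert x _)⟩, ⟨y, hsub (mem_insert_of_mem x rfl)⟩, ?_, ?_⟩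
  · simpa using hxy
  · rw [← hhull, hpair, convexHull_pair]

theorem IsPolytope.isFaceDim_segment_of_adj (hP : IsPolytope P) {x y : P.extremePoints ℝ}
    (h : (polytopeGraph (P.extremePoints ℝ)).Adj x y) :
    IsFaceDim P (segment ℝ (x : EuclideanSpace ℝ (Fin N)) y) 1 := by
  obtain ⟨hxy, hexp⟩ := h
  rw [mem_ofPred_eq, hP.convexHull_extremePoints] at hexp
  exact isFaceDim_segment (Subtype.coe_injective.ne hxy) hexp

theorem IsPolytope.mConnected_polytopeGraph_extremePoints (hP : IsPolytope P) (hne : P.Nonempty) :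
    MConnected (polytopeGraph (P.extremePoints ℝ)) (sdim P) := by
  have hhull := hP.convexHull_extremePoints
  rw [← hhull, convexHull_nonempty_iff] at hne
  have hdim := sdim_convexHull (P.extremePoints ℝ)
  rw [hhull] at hdim
  rw [hdim]
  exact mConnected_polytopeGraph hP.finite_extremePoints hne
    hP.convex.convexIndependent_extremePoints

theorem IsPolytope.exists_mem_degree_add_two_le (hP : IsPolytope P)
    {𝓔 : Set (Set (EuclideanSpace ℝ (Fin N)))} (hfin : 𝓔.Finite) [Fintype (P.extremePoints ℝ)]
    [DecidableRel (segmentGraph (P.extremePoints ℝ) 𝓔).Adj] {d : ℕ} (hd : 2 ≤ d)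
    (hcard : 𝓔.ncard ≤ 2 * d - 3) (hF : IsFaceDim P F 1) (hF𝓔 : F ∉ 𝓔) :
    ∃ x : P.extremePoints ℝ, ↑x ∈ F ∧ (segmentGraph (P.extremePoints ℝ) 𝓔).degree x + 2 ≤ d := by
  obtain ⟨x, y, hxy, rfl⟩ := hP.exists_eq_segment hF
  rcases degree_add_two_le_or_of_segment_notMem hP.convex.convexIndependent_extremePoints
    hfin hd hcard hxy hF𝓔 with hx | hy
  exacts [⟨x, left_mem_segment ℝ _ _, hx⟩, ⟨y, right_mem_segment ℝ _ _, hy⟩]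

end Faces

/-- Let `P` be a `d`-dimensional convex polytope with `d ≥ 4`, let `E` be a set
of edges of `P` with `|E| ≤ 2d-3` and let `f, g` be edges of `P` not in `E`.
Then there is a walk `(v_0, e_1, v_1, …, e_n, v_n)` in the graph `G(P)` such
that `v_0` is an endpoint of `f`, `v_n` is an endpoint of `g`, every vertex
`v_i` is an endpoint of at most `d-2` edges in `E`, and for every `i` with
`e_i ∈ E`, at most `d-1` edges in `E` have a common endpoint with `e_i`. -/
theorem stmt_11 (d : ℕ) (hd : 4 ≤ d) {N : ℕ}
    (P : Set (EuclideanSpace ℝ (Fin N))) (hP : IsPolytope P) (hdim : sdim P = d)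
    (E : Set (Set (EuclideanSpace ℝ (Fin N)))) (hE : ∀ e ∈ E, IsFaceDim P e 1)
    (hEfin : E.Finite) (hEcard : E.ncard ≤ 2 * d - 3)
    (f g : Set (EuclideanSpace ℝ (Fin N)))
    (hf : IsFaceDim P f 1) (hg : IsFaceDim P g 1) (hfE : f ∉ E) (hgE : g ∉ E) :
    ∃ (n : ℕ) (v : Fin (n + 1) → EuclideanSpace ℝ (Fin N))
      (e : Fin n → Set (EuclideanSpace ℝ (Fin N))),
      (∀ i, IsFaceDim P {v i} 0) ∧
      (∀ i : Fin n, IsFaceDim P (e i) 1 ∧ v i.castSucc ∈ e i ∧ v i.succ ∈ e i ∧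
        v i.castSucc ≠ v i.succ) ∧
      v 0 ∈ f ∧ v (Fin.last n) ∈ g ∧
      (∀ i, {e' ∈ E | v i ∈ e'}.ncard ≤ d - 2) ∧
      (∀ i : Fin n, e i ∈ E →
        {e' ∈ E | ∃ x, IsFaceDim P {x} 0 ∧ x ∈ e' ∧ x ∈ e i}.ncard ≤ d - 1) := by
  classical
  have := hP.finite_extremePoints.fintype
  have hind := hP.convex.convexIndependent_extremePoints
  have hd2 : 2 ≤ d := by omega
  have hseg (e) (he : e ∈ E) := hP.exists_eq_segment (hE e he)
  obtain ⟨x, hxf, hx⟩ := hP.exists_mem_degree_add_two_le hEfin hd2 hEcard hf hfE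
  obtain ⟨y, hyg, hy⟩ := hP.exists_mem_degree_add_two_le hEfin hd2 hEcard hg hgE
  have hG := hP.mConnected_polytopeGraph_extremePoints (hf.2.1.mono hf.1.subset)
  obtain ⟨p⟩ := reachable_safeGraph hd (hdim ▸ hG)
    ((card_edgeFinset_segmentGraph_le hind hEfin).trans hEcard) hx hy
  have hadj (i : Fin p.length) := p.adj_getVert_succ i.2
  refine ⟨p.length, fun i => p.getVert i, fun i => segment ℝ ↑(p.getVert i) ↑(p.getVert (i + 1)),
    fun i => hP.isFaceDim_singleton_iff.2 (p.getVert i).2, fun i =>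
      ⟨hP.isFaceDim_segment_of_adj (hadj i).1, left_mem_segment ℝ _ _, right_mem_segment ℝ _ _,
        fun h => (hadj i).ne (Subtype.ext h)⟩, ?_, ?_, fun i => ?_, fun i hi => ?_⟩
  · simpa using hxf
  · simpa using hyg
  · exact (ncard_setOf_mem_le_degree_segmentGraph hind hseg (p.getVert i)).trans
      (Nat.le_sub_of_add_le (degree_add_two_le_of_reachable_safeGraph (p.take i).reachable hx))
  · simp only [hP.isFaceDim_singleton_iff]
    have hlt := ncard_setOf_exists_mem_segment_lt hind hEfin hseg hi
    have hle := (hadj i).2.2.2 ⟨(hadj i).ne, hi⟩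
    omega
end

section
/- For every convex polytope P of dimension d and every integer k with 0 ≤ k ≤ d-1, the graph G_k(P) is connected. -/
open Set

/-!
By induction on `k`, it suffices to link any two `k`-faces `F` and `F'` containing a common
`(k - 1)`-face `E` (the empty face when `k = 0`): consecutive faces on a path in `G_k(P)` share a
`(k + 1)`-face, and the path can be turned around in `G_{k+1}(P)` at each of its vertices.

Let `μ ≥ 0` cut out `E`. For every affine functional `g` vanishing on `E`, tilting the hyperplane
`μ = 0` in the direction `g` until it hits a new vertex of `P` gives a supporting hyperplane, which
depends continuously on `g` and touches `P` in a face of dimension at least `k`. The directions for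
which that face has dimension at least `k + 2` lie in finitely many subspaces of codimension at
least two, so a segment from a direction defining `F` to a generic one `c` avoids them. Along it the
`k`-faces in the touching faces cover the segment by closed sets, and two `k`-faces whose sets meet
lie in a common `(k + 1)`-face; as the segment is connected, `F` is linked to the `k`-faces met at
`c`. The same `c` serves `F'`.
-/

section LinearAlgebra

lemma exists_mem_forall_notMem_of_not_le {K V ι : Type*} [DivisionRing K] [Infinite K]
    [AddCommGroup V] [Module K V] [Finite ι] {W : Submodule K V} {U : ι → Submodule K V}
    (h : ∀ i, ¬ W ≤ U i) :
    ∃ c ∈ W, ∀ i, c ∉ U i := by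
  by_contra! hcover
  have hcover' : ⋃ i, ((U i).comap W.subtype : Set W) = univ :=
    eq_univ_of_forall fun c ↦ mem_iUnion.2 (hcover c c.2)
  obtain ⟨i, hi⟩ := Subspace.exists_eq_top_of_iUnion_eq_univ hcover'
  exact h i (Submodule.comap_subtype_eq_top.1 hi)

variable {K V : Type*} [Field K] [AddCommGroup V] [Module K V]

lemma finrank_span_pair_le (v w : V) : Module.finrank K (Submodule.span K {v, w}) ≤ 2 := by
  classical
  have h := finrank_span_finset_le_card (R := K) {v, w}
  rw [Finset.coe_pair] at h
  exact h.trans Finset.card_le_two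

/-- The affine functionals on `V` vanishing on `A`. -/
def vanishing (A : Set V) : Submodule K (V →ᵃ[K] K) where
  carrier := {f | ∀ p ∈ A, f p = 0}
  zero_mem' := fun _ _ ↦ rfl
  add_mem' := fun hf hg p hp ↦ by simp [hf p hp, hg p hp]
  smul_mem' := fun c f hf p hp ↦ by simp [hf p hp]

lemma mem_vanishing {A : Set V} {f : V →ᵃ[K] K} : f ∈ vanishing A ↔ ∀ p ∈ A, f p = 0 := Iff.rfl

lemma vanishing_anti {A B : Set V} (h : A ⊆ B) : vanishing (K := K) B ≤ vanishing A :=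
  fun _ hf p hp ↦ hf p (h hp)

lemma linear_mem_dualAnnihilator_vectorSpan {A : Set V} {f : V →ᵃ[K] K} (hf : f ∈ vanishing A) :
    f.linear ∈ (vectorSpan K A).dualAnnihilator := by
  suffices vectorSpan K A ≤ f.linear.ker from
    (Submodule.mem_dualAnnihilator _).2 fun v hv ↦ this hv
  rw [vectorSpan, Submodule.span_le]
  rintro _ ⟨p, hp, q, hq, rfl⟩
  simp only [SetLike.mem_coe, LinearMap.mem_ker, AffineMap.linearMap_vsub, hf p hp, hf q hq,
    vsub_self]

/-- Taking linear parts identifies the affine functionals vanishing on `A` with the linear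
functionals vanishing on the direction of `A`, since a functional is recovered from its linear part
and its zero at `o`. -/
def vanishingEquivDualAnnihilator {A : Set V} {o : V} (ho : o ∈ A) :
    vanishing (K := K) A ≃ₗ[K] (vectorSpan K A).dualAnnihilator where
  toFun f := ⟨f.1.linear, linear_mem_dualAnnihilator_vectorSpan f.2⟩
  map_add' _ _ := rfl
  map_smul' _ _ := rfl
  invFun l := ⟨l.1.toAffineMap - AffineMap.const K V (l.1 o), fun p hp ↦ by
    simpa using (Submodule.mem_dualAnnihilator _).1 l.2 _ (vsub_mem_vectorSpan K hp ho)⟩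
  left_inv f := by
    ext p
    have h := f.1.linearMap_vsub p o
    rw [f.2 o ho, vsub_eq_sub, map_sub] at h
    simpa using h
  right_inv l := by
    ext v
    simp

variable (K) in
/-- The affine rank of `A`, i.e. its dimension plus one, is `k`. The empty set has rank `0` and a
point has rank `1`; this is `(dim V + 1) - dim (vanishing A)` without the subtraction. -/
def HasAffineRank (A : Set V) (k : ℕ) : Prop :=
  Module.finrank K (vanishing (K := K) A) + k = Module.finrank K V + 1

variable [FiniteDimensional K V]

lemma finrank_vanishing_add_finrank_vectorSpan {A : Set V} (hA : A.Nonempty) :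
    Module.finrank K (vanishing (K := K) A) + Module.finrank K (vectorSpan K A) =
      Module.finrank K V := by
  obtain ⟨o, ho⟩ := hA
  rw [(vanishingEquivDualAnnihilator ho).finrank_eq, add_comm,
    Subspace.finrank_add_finrank_dualAnnihilator_eq]

lemma hasAffineRank_empty : HasAffineRank K (∅ : Set V) 0 := by
  have htop : vanishing (K := K) (∅ : Set V) = ⊤ := by
    ext
    simp [mem_vanishing]
  rw [HasAffineRank, htop, finrank_top, (AffineMap.toConstProdLinearMap K).finrank_eq,
    Module.finrank_prod, Module.finrank_self, Subspace.dual_finrank_eq, add_zero, add_comm]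

lemma hasAffineRank_succ_iff {A : Set V} {k : ℕ} (hA : A.Nonempty) :
    HasAffineRank K A (k + 1) ↔ Module.finrank K (vectorSpan K A) = k := by
  rw [HasAffineRank, ← add_assoc, ← finrank_vanishing_add_finrank_vectorSpan (K := K) hA]
  omega

lemma vanishing_eq_of_finrank_le {A B : Set V} (hA : A.Nonempty) (hAB : A ⊆ B)
    (hdim : Module.finrank K (vectorSpan K B) ≤ Module.finrank K (vectorSpan K A)) :
    vanishing (K := K) B = vanishing A := by
  refine Submodule.eq_of_le_of_finrank_le (vanishing_anti hAB) ?_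
  have := finrank_vanishing_add_finrank_vectorSpan (K := K) hA
  have := finrank_vanishing_add_finrank_vectorSpan (K := K) (hA.mono hAB)
  omega

lemma HasAffineRank.not_subset {E F : Set V} {k l : ℕ} (hE : HasAffineRank K E k)
    (hF : HasAffineRank K F l) (hkl : k < l) : ¬ F ⊆ E := by
  intro hFE
  have := Submodule.finrank_mono (vanishing_anti (K := K) hFE)
  unfold HasAffineRank at hE hF
  omega

lemma HasAffineRank.le_finrank_vectorSpan {E A : Set V} {k : ℕ} (hE : HasAffineRank K E k)
    (hA : A.Nonempty) (hlt : vanishing (K := K) A < vanishing E) :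
    k ≤ Module.finrank K (vectorSpan K A) := by
  have := Submodule.finrank_lt_finrank_of_lt hlt
  have := finrank_vanishing_add_finrank_vectorSpan (K := K) hA
  unfold HasAffineRank at hE
  omega

lemma HasAffineRank.exists_mem_vanishing_forall_notMem_sup [Infinite K] {E : Set V} {k : ℕ}
    (hE : HasAffineRank K E k) {𝓐 : Set (Set V)} (h𝓐 : 𝓐.Finite)
    {𝓑 : Set (Submodule K (V →ᵃ[K] K))} (h𝓑 : 𝓑.Finite)
    (hne : ∀ A ∈ 𝓐, A.Nonempty)
    (hdim : ∀ A ∈ 𝓐, ∀ B ∈ 𝓑, k + Module.finrank K B ≤ Module.finrank K (vectorSpan K A)) :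
    ∃ c ∈ vanishing (K := K) E, ∀ A ∈ 𝓐, ∀ B ∈ 𝓑, c ∉ vanishing A ⊔ B := by
  have := h𝓐.to_subtype
  have := h𝓑.to_subtype
  have hlarge : ∀ i : 𝓐 × 𝓑, ¬ vanishing (K := K) E ≤ vanishing i.1.1 ⊔ i.2.1 := by
    rintro ⟨⟨A, hA⟩, B, hB⟩ hle
    have := Submodule.finrank_mono hle
    have := Submodule.finrank_add_le_finrank_add_finrank (vanishing (K := K) A) B
    have := finrank_vanishing_add_finrank_vectorSpan (K := K) (hne A hA)
    have := hdim A hA B hB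
    unfold HasAffineRank at hE
    dsimp only at *
    omega
  obtain ⟨c, hcE, hc⟩ := exists_mem_forall_notMem_of_not_le hlarge
  exact ⟨c, hcE, fun A hA B hB ↦ hc (⟨A, hA⟩, ⟨B, hB⟩)⟩

end LinearAlgebra

section ZeroFace

variable {X : Type*} [AddCommGroup X] [Module ℝ X] {P S : Set X} {f : X →ᵃ[ℝ] ℝ}

/-- The points of `P` at which `f` vanishes. For `f` nonnegative on `P` this is a face of `P`, and
the empty face is included as the case `f = 1`. -/
def zeroFace (P : Set X) (f : X →ᵃ[ℝ] ℝ) : Set X := {p ∈ P | f p = 0}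

lemma mem_vanishing_zeroFace : f ∈ vanishing (zeroFace P f) := fun _ hp ↦ hp.2

lemma zeroFace_eq_of_subset_of_finrank_le [FiniteDimensional ℝ X] {A : Set X}
    (hne : (zeroFace P f).Nonempty) (hA : A ⊆ P) (hle : zeroFace P f ⊆ A)
    (hdim : Module.finrank ℝ (vectorSpan ℝ A) ≤ Module.finrank ℝ (vectorSpan ℝ (zeroFace P f))) :
    zeroFace P f = A := by
  have hfA : f ∈ vanishing A := by
    rw [vanishing_eq_of_finrank_le hne hle hdim]
    exact mem_vanishing_zeroFace
  exact hle.antisymm fun p hp ↦ ⟨hA hp, hfA p hp⟩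

lemma nonempty_sep_ne_zero_of_mem_convexHull {q : X} (hq : q ∈ convexHull ℝ S) (hfq : f q ≠ 0) :
    {p ∈ S | f p ≠ 0}.Nonempty := by
  by_contra! hempty
  have hzero : S ⊆ f ⁻¹' {0} := fun p hp ↦ by_contra fun hfp ↦ hempty.subset ⟨hp, hfp⟩
  exact hfq (convexHull_min hzero ((convex_singleton 0).affine_preimage f) hq)

end ZeroFace

section Tilting

variable {X : Type*} [AddCommGroup X] [Module ℝ X] {P S : Set X} {f g μ : X →ᵃ[ℝ] ℝ}

/-- The greatest ratio `g p / μ p` over the points `p` of `S` off the hyperplane `μ = 0`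
(and `0` if there are none). -/
noncomputable def maxRatio (S : Set X) (μ g : X →ᵃ[ℝ] ℝ) : ℝ :=
  sSup ((fun p ↦ g p / μ p) '' {p ∈ S | μ p ≠ 0})

/-- For `μ ≥ 0` on `S` and `g` vanishing where `μ` does, the functional `t • μ - g` with the least
`t` for which it is nonnegative on `S`: the hyperplane `μ = 0` is rotated about its intersection
with `g = 0` until it hits a new point of `S`. -/
noncomputable def tilt (S : Set X) (μ g : X →ᵃ[ℝ] ℝ) : X →ᵃ[ℝ] ℝ := maxRatio S μ g • μ - g

lemma tilt_apply (p : X) : tilt S μ g p = maxRatio S μ g * μ p - g p := rfl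

lemma tilt_nonneg (hS : S.Finite) (hμ : ∀ p ∈ convexHull ℝ S, 0 ≤ μ p)
    (hg : ∀ p ∈ zeroFace (convexHull ℝ S) μ, g p ≤ 0) {p : X} (hp : p ∈ convexHull ℝ S) :
    0 ≤ tilt S μ g p := by
  refine convexHull_min (fun p hp ↦ ?_) ((convex_Ici 0).affine_preimage (tilt S μ g)) hp
  have hpS := subset_convexHull ℝ S hp
  rw [mem_preimage, mem_Ici, tilt_apply, sub_nonneg]
  by_cases hμp : μ p = 0
  · simpa only [hμp, mul_zero] using hg p ⟨hpS, hμp⟩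
  · rw [← div_le_iff₀ ((hμ p hpS).lt_of_ne' hμp)]
    exact le_csSup ((hS.sep _).image _).bddAbove ⟨p, ⟨hp, hμp⟩, rfl⟩

lemma exists_tilt_eq_zero (hS : S.Finite) (hne : {p ∈ S | μ p ≠ 0}.Nonempty) :
    ∃ p ∈ S, μ p ≠ 0 ∧ tilt S μ g p = 0 := by
  obtain ⟨q, ⟨hq, hμq⟩, hmax⟩ :=
    (hne.image fun p ↦ g p / μ p).csSup_mem ((hS.sep _).image _)
  refine ⟨q, hq, hμq, ?_⟩
  rw [tilt_apply, maxRatio, ← hmax, div_mul_cancel₀ _ hμq, sub_self]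

lemma continuous_tilt {T : Type*} [TopologicalSpace T] (hS : S.Finite) {g : T → X →ᵃ[ℝ] ℝ}
    (hg : ∀ p, Continuous fun t ↦ g t p) (p : X) : Continuous fun t ↦ tilt S μ (g t) p := by
  suffices hratio : Continuous fun t ↦ maxRatio S μ (g t) from
    (hratio.mul continuous_const).sub (hg p)
  obtain hempty | hne := {p ∈ S | μ p ≠ 0}.eq_empty_or_nonempty
  · simp only [maxRatio, hempty, image_empty, continuous_const]
  lift {p ∈ S | μ p ≠ 0} to Finset X using hS.sep _ with R hR
  rw [Finset.coe_nonempty] at hne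
  have hsup (t : T) : maxRatio S μ (g t) = R.sup' hne fun p ↦ g t p / μ p := by
    rw [Finset.sup'_eq_csSup_image, maxRatio, hR]
  simp only [hsup]
  exact Continuous.finset_sup'_apply hne fun p _ ↦ (hg p).div_const _

lemma tilt_neg_eq_self (hS : S.Finite) (hμ : ∀ p ∈ convexHull ℝ S, 0 ≤ μ p)
    (hf : ∀ p ∈ convexHull ℝ S, 0 ≤ f p) {q : X} (hq : q ∈ zeroFace (convexHull ℝ S) f)
    (hμq : μ q ≠ 0) : tilt S μ (-f) = f := by
  obtain ⟨hqP, hfq⟩ := hq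
  have hnonneg : 0 ≤ maxRatio S μ (-f) := by
    have h := tilt_nonneg hS hμ (g := -f) (fun p hp ↦ neg_nonpos.2 (hf p hp.1)) hqP
    rw [tilt_apply, AffineMap.coe_neg, Pi.neg_apply, hfq, neg_zero, sub_zero] at h
    exact nonneg_of_mul_nonneg_left h ((hμ q hqP).lt_of_ne' hμq)
  have hnonpos : maxRatio S μ (-f) ≤ 0 := by
    obtain ⟨p, hp, hμp, htilt⟩ := exists_tilt_eq_zero (g := -f) hS
      (nonempty_sep_ne_zero_of_mem_convexHull hqP hμq)
    have hpP := subset_convexHull ℝ S hp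
    rw [tilt_apply, AffineMap.coe_neg, Pi.neg_apply, sub_neg_eq_add] at htilt
    exact nonpos_of_mul_nonpos_left (by linarith [hf p hpP]) ((hμ p hpP).lt_of_ne' hμp)
  rw [tilt, hnonpos.antisymm hnonneg, zero_smul, zero_sub, neg_neg]

lemma zeroFace_tilt_nonempty (hS : S.Finite) (hne : {p ∈ S | μ p ≠ 0}.Nonempty) :
    (zeroFace (convexHull ℝ S) (tilt S μ g)).Nonempty := by
  obtain ⟨q, hq, -, hzero⟩ := exists_tilt_eq_zero (g := g) hS hne
  exact ⟨q, subset_convexHull ℝ S hq, hzero⟩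

lemma vanishing_zeroFace_tilt_lt (hS : S.Finite) (hne : {p ∈ S | μ p ≠ 0}.Nonempty)
    (hg : g ∈ vanishing (zeroFace (convexHull ℝ S) μ)) :
    vanishing (K := ℝ) (zeroFace (convexHull ℝ S) (tilt S μ g)) <
      vanishing (zeroFace (convexHull ℝ S) μ) := by
  have hsub : zeroFace (convexHull ℝ S) μ ⊆ zeroFace (convexHull ℝ S) (tilt S μ g) :=
    fun p hp ↦ ⟨hp.1, by rw [tilt_apply, hp.2, hg p hp, mul_zero, sub_zero]⟩
  obtain ⟨q, hq, hμq, hzero⟩ := exists_tilt_eq_zero (g := g) hS hne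
  refine (vanishing_anti hsub).lt_of_not_ge fun hge ↦ hμq ?_
  exact hge mem_vanishing_zeroFace q ⟨subset_convexHull ℝ S hq, hzero⟩

lemma mem_vanishing_zeroFace_tilt_sup :
    g ∈ vanishing (zeroFace P (tilt S μ g)) ⊔ Submodule.span ℝ {μ} := by
  have hg : g = -tilt S μ g + maxRatio S μ g • μ := by rw [tilt, neg_sub, sub_add_cancel]
  nth_rw 2 [hg]
  exact Submodule.add_mem_sup (neg_mem mem_vanishing_zeroFace)
    (Submodule.smul_mem _ _ (Submodule.mem_span_singleton_self μ))

lemma mem_vanishing_zeroFace_tilt_sub_sup {c : X →ᵃ[ℝ] ℝ} {s t : ℝ} (ht : t ≠ 0) :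
    c ∈ vanishing (zeroFace P (tilt S μ (t • c - s • f))) ⊔ Submodule.span ℝ {μ, f} := by
  have hspan : Submodule.span ℝ {μ} ≤ Submodule.span ℝ {μ, f} :=
    Submodule.span_mono (singleton_subset_iff.2 (mem_insert μ {f}))
  have hf : s • f ∈ Submodule.span ℝ {μ, f} :=
    Submodule.smul_mem _ _ (Submodule.subset_span (mem_insert_of_mem μ rfl))
  rw [← Submodule.smul_mem_iff _ ht]
  have hdiff : t • c - s • f ∈
      vanishing (zeroFace P (tilt S μ (t • c - s • f))) ⊔ Submodule.span ℝ {μ, f} :=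
    (sup_le_sup_left hspan _ : _ ≤ _) mem_vanishing_zeroFace_tilt_sup
  simpa only [sub_add_cancel] using add_mem hdiff (Submodule.mem_sup_right hf)

end Tilting

section ExposedFaces

variable {X : Type*} [NormedAddCommGroup X] [NormedSpace ℝ X] {P S E F : Set X} {f g μ : X →ᵃ[ℝ] ℝ}

lemma exists_zeroFace_eq_of_isExposed (hF : IsExposed ℝ P F) :
    ∃ f : X →ᵃ[ℝ] ℝ, (∀ p ∈ P, 0 ≤ f p) ∧ zeroFace P f = F := by
  obtain rfl | ⟨o, ho⟩ := F.eq_empty_or_nonempty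
  · exact ⟨AffineMap.const ℝ X 1, fun _ _ ↦ zero_le_one, by simp [zeroFace]⟩
  obtain ⟨l, rfl⟩ := hF ⟨o, ho⟩
  have hmax (p : X) (hp : p ∈ P) : l p ≤ l o := ho.2 p hp
  refine ⟨AffineMap.const ℝ X (l o) - l.toLinearMap.toAffineMap,
    fun p hp ↦ sub_nonneg.2 (hmax p hp), Subset.antisymm ?_ ?_⟩
  · rintro p ⟨hp, hfp⟩
    exact ⟨hp, fun q hq ↦ (hmax q hq).trans_eq (sub_eq_zero.1 hfp)⟩
  · rintro p ⟨hp, hpmax⟩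
    exact ⟨hp, sub_eq_zero.2 ((hpmax o ho.1).antisymm (hmax p hp))⟩

lemma eq_convexHull_inter_of_isExposed_convexHull (hS : S.Finite)
    (hF : IsExposed ℝ (convexHull ℝ S) F) : F = convexHull ℝ (F ∩ S) := by
  have hconv : Convex ℝ F := hF.convex (convex_convexHull ℝ S)
  have hext : F.extremePoints ℝ ⊆ F ∩ S := subset_inter extremePoints_subset
    (hF.isExtreme.extremePoints_subset_extremePoints.trans extremePoints_convexHull_subset)
  refine Subset.antisymm ?_ (convexHull_min inter_subset_left hconv)
  rw [← ((hS.inter_of_right F).isClosed_convexHull ℝ).closure_eq]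
  exact (closure_convexHull_extremePoints (hF.isCompact (hS.isCompact_convexHull ℝ))
    hconv).symm.subset.trans (closure_mono (convexHull_mono hext))

lemma finite_setOf_isExposed_convexHull (hS : S.Finite) :
    {F | IsExposed ℝ (convexHull ℝ S) F}.Finite :=
  (hS.finite_subsets.image (convexHull ℝ)).subset fun F hF ↦
    ⟨F ∩ S, inter_subset_right, (eq_convexHull_inter_of_isExposed_convexHull hS hF).symm⟩

variable [FiniteDimensional ℝ X]

lemma isExposed_zeroFace (hf : ∀ p ∈ P, 0 ≤ f p) : IsExposed ℝ P (zeroFace P f) := by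
  rintro ⟨o, hoP, ho⟩
  have hlin (p : X) : f.linear p - f.linear o = f p := by
    rw [← map_sub, ← vsub_eq_sub, f.linearMap_vsub, ho, vsub_eq_sub, sub_zero]
  refine ⟨-f.linear.toContinuousLinearMap, Subset.antisymm ?_ ?_⟩
  · rintro p ⟨hp, hfp⟩
    refine ⟨hp, fun q hq ↦ neg_le_neg ?_⟩
    change f.linear p ≤ f.linear q
    linarith [hlin p, hlin q, hf q hq]
  · rintro p ⟨hp, hmax⟩
    have hle : f.linear p ≤ f.linear o := neg_le_neg_iff.1 (hmax o hoP)
    exact ⟨hp, le_antisymm (by linarith [hlin p]) (hf p hp)⟩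

lemma isExposed_zeroFace_tilt (hS : S.Finite) (hμ : ∀ p ∈ convexHull ℝ S, 0 ≤ μ p)
    (hg : g ∈ vanishing (zeroFace (convexHull ℝ S) μ)) :
    IsExposed ℝ (convexHull ℝ S) (zeroFace (convexHull ℝ S) (tilt S μ g)) :=
  isExposed_zeroFace fun _ hp ↦ tilt_nonneg hS hμ (fun q hq ↦ (hg q hq).le) hp

-- Tilting a supporting hyperplane of `F` in the direction `-g` leaves a functional that restricts
-- to `g` on `F`; adding `f` confines its zeros to `F`.
lemma isExposed_trans_of_finite {G : Set X} (hS : S.Finite)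
    (hF : IsExposed ℝ (convexHull ℝ S) F) (hG : IsExposed ℝ F G) :
    IsExposed ℝ (convexHull ℝ S) G := by
  obtain ⟨f, hf, rfl⟩ := exists_zeroFace_eq_of_isExposed hF
  obtain ⟨g, hg, rfl⟩ := exists_zeroFace_eq_of_isExposed hG
  have htilt {p : X} (hp : p ∈ convexHull ℝ S) : 0 ≤ tilt S f (-g) p :=
    tilt_nonneg hS hf (fun q hq ↦ neg_nonpos.2 (hg q hq)) hp
  have hzero : zeroFace (convexHull ℝ S) (tilt S f (-g) + f) =
      zeroFace (zeroFace (convexHull ℝ S) f) g := by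
    ext p
    constructor
    · rintro ⟨hp, hsum⟩
      obtain ⟨htp, hfp⟩ := (add_eq_zero_iff_of_nonneg (htilt hp) (hf p hp)).1 hsum
      rw [tilt_apply, hfp, mul_zero, zero_sub, AffineMap.coe_neg, Pi.neg_apply, neg_neg] at htp
      exact ⟨⟨hp, hfp⟩, htp⟩
    · rintro ⟨⟨hp, hfp⟩, hgp⟩
      refine ⟨hp, ?_⟩
      simp [tilt_apply, hfp, hgp]
  rw [← hzero]
  exact isExposed_zeroFace fun p hp ↦ add_nonneg (htilt hp) (hf p hp)

lemma exists_isExposed_finrank_vectorSpan_eq {k : ℕ} (hS : S.Finite) (hne : S.Nonempty)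
    (hEP : IsExposed ℝ (convexHull ℝ S) E) (hE : HasAffineRank ℝ E k)
    (hk : k ≤ Module.finrank ℝ (vectorSpan ℝ (convexHull ℝ S))) :
    ∃ F, IsExposed ℝ (convexHull ℝ S) F ∧ F.Nonempty ∧
      Module.finrank ℝ (vectorSpan ℝ F) = k := by
  obtain ⟨μ, hμ, rfl⟩ := exists_zeroFace_eq_of_isExposed hEP
  have hμne : {p ∈ S | μ p ≠ 0}.Nonempty := by
    obtain ⟨q, hq, hμq⟩ : ∃ q ∈ convexHull ℝ S, μ q ≠ 0 := by
      by_contra! hzero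
      have hsub : convexHull ℝ S ⊆ zeroFace (convexHull ℝ S) μ := fun q hq ↦ ⟨hq, hzero q hq⟩
      exact hE.not_subset ((hasAffineRank_succ_iff hne.convexHull).2 rfl) (by omega) hsub
    exact nonempty_sep_ne_zero_of_mem_convexHull hq hμq
  obtain ⟨c, hcE, hc⟩ := hE.exists_mem_vanishing_forall_notMem_sup
    (𝓐 := {A | IsExposed ℝ (convexHull ℝ S) A ∧ A.Nonempty ∧
      k + 1 ≤ Module.finrank ℝ (vectorSpan ℝ A)})
    ((finite_setOf_isExposed_convexHull hS).subset fun _ hA ↦ hA.1)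
    (finite_singleton (Submodule.span ℝ {μ})) (fun _ hA ↦ hA.2.1) (by
      rintro A ⟨-, -, hA⟩ _ rfl
      have : Module.finrank ℝ (Submodule.span ℝ {μ}) ≤ 1 :=
        (finrank_span_le_card {μ}).trans_eq (by rw [toFinset_singleton, Finset.card_singleton])
      omega)
  have hA := zeroFace_tilt_nonempty (g := c) hS hμne
  have hexp := isExposed_zeroFace_tilt hS hμ hcE
  refine ⟨_, hexp, hA, le_antisymm ?_ ?_⟩
  · by_contra! hlt
    exact hc _ ⟨hexp, hA, hlt⟩ _ rfl mem_vanishing_zeroFace_tilt_sup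
  · exact hE.le_finrank_vectorSpan hA (vanishing_zeroFace_tilt_lt hS hμne hcE)

end ExposedFaces

section FaceGraph

lemma reachable_of_isClosed_cover {V T : Type*} [Finite V] [TopologicalSpace T]
    [PreconnectedSpace T] {G : SimpleGraph V} {C : V → Set T} (hC : ∀ i, IsClosed (C i))
    (hcover : ∀ t, ∃ i, t ∈ C i) (hG : ∀ i j, (C i ∩ C j).Nonempty → G.Reachable i j) {i j : V}
    (hi : (C i).Nonempty) (hj : (C j).Nonempty) : G.Reachable i j := by
  by_contra hij
  have hclosed (W : Set V) : IsClosed (⋃ l ∈ W, C l) :=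
    W.toFinite.isClosed_biUnion fun l _ ↦ hC l
  obtain ⟨t, -, htR, htR'⟩ := isPreconnected_closed_iff.1 isPreconnected_univ _ _
    (hclosed {l | G.Reachable i l}) (hclosed {l | ¬ G.Reachable i l})
    (fun t _ ↦ by
      obtain ⟨l, hl⟩ := hcover t
      exact (em (G.Reachable i l)).imp (fun h ↦ mem_biUnion h hl) fun h ↦ mem_biUnion h hl)
    (univ_inter _ ▸ hi.mono (subset_iUnion₂_of_subset i (SimpleGraph.Reachable.refl i) subset_rfl))
    (univ_inter _ ▸ hj.mono (subset_iUnion₂_of_subset j hij subset_rfl))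
  obtain ⟨l, hil, htl⟩ := mem_iUnion₂.1 htR
  obtain ⟨m, him, htm⟩ := mem_iUnion₂.1 htR'
  exact him (hil.trans (hG l m ⟨t, htl, htm⟩))

variable {N k : ℕ} {P S E F A : Set (EuclideanSpace ℝ (Fin N))}
  {μ f c : EuclideanSpace ℝ (Fin N) →ᵃ[ℝ] ℝ}

lemma sdim_eq_finrank_vectorSpan (A : Set (EuclideanSpace ℝ (Fin N))) :
    sdim A = Module.finrank ℝ (vectorSpan ℝ A) := by
  rw [sdim, direction_affineSpan]

lemma IsFaceDim.hasAffineRank (hF : IsFaceDim P F k) : HasAffineRank ℝ F (k + 1) := by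
  rw [hasAffineRank_succ_iff hF.2.1, ← sdim_eq_finrank_vectorSpan, hF.2.2]

lemma IsPolytope.finite_setOf_isExposed (hP : IsPolytope P) : {F | IsExposed ℝ P F}.Finite := by
  obtain ⟨S, hS, rfl⟩ := hP
  exact finite_setOf_isExposed_convexHull hS

lemma IsPolytope.isPolytope_of_isExposed (hP : IsPolytope P) (hF : IsExposed ℝ P F) :
    IsPolytope F := by
  obtain ⟨S, hS, rfl⟩ := hP
  exact ⟨F ∩ S, hS.inter_of_right F, eq_convexHull_inter_of_isExposed_convexHull hS hF⟩

lemma IsPolytope.isFaceDim_trans (hP : IsPolytope P) {G : Set (EuclideanSpace ℝ (Fin N))}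
    (hF : IsExposed ℝ P F) (hG : IsFaceDim F G k) : IsFaceDim P G k := by
  obtain ⟨S, hS, rfl⟩ := hP
  exact ⟨isExposed_trans_of_finite hS hF hG.1, hG.2⟩

lemma IsPolytope.finite_faces (hP : IsPolytope P) (k : ℕ) : Finite {F // IsFaceDim P F k} :=
  (hP.finite_setOf_isExposed.subset fun _ hF ↦ hF.1 : {F | IsFaceDim P F k}.Finite).to_subtype

lemma IsPolytope.exists_isFaceDim (hP : IsPolytope P) (hne : P.Nonempty) (hk : k ≤ sdim P) :
    ∃ F, IsFaceDim P F k := by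
  obtain ⟨S, hS, rfl⟩ := hP
  rw [convexHull_nonempty_iff] at hne
  simp only [IsFaceDim, sdim_eq_finrank_vectorSpan] at hk ⊢
  induction k with
  | zero =>
    exact exists_isExposed_finrank_vectorSpan_eq hS hne isExposed_empty hasAffineRank_empty hk
  | succ k ih =>
    obtain ⟨E, hE, hEne, hEk⟩ := ih (by omega)
    exact exists_isExposed_finrank_vectorSpan_eq hS hne hE
      ((hasAffineRank_succ_iff hEne).2 hEk) hk

lemma IsPolytope.exists_isFaceDim_subset (hP : IsPolytope P) (hA : IsExposed ℝ P A)
    (hne : A.Nonempty) (hk : k ≤ sdim A) : ∃ F, IsFaceDim P F k ∧ F ⊆ A := by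
  obtain ⟨F, hF⟩ := (hP.isPolytope_of_isExposed hA).exists_isFaceDim hne hk
  exact ⟨F, hP.isFaceDim_trans hA hF, hF.1.subset⟩

lemma IsFaceDim.eq_of_subset (hF : IsFaceDim P F k) (hFA : F ⊆ A) (hAP : A ⊆ P)
    (hA : sdim A ≤ k) : F = A := by
  obtain ⟨f, -, rfl⟩ := exists_zeroFace_eq_of_isExposed hF.1
  refine zeroFace_eq_of_subset_of_finrank_le hF.2.1 hAP hFA ?_
  simpa only [← sdim_eq_finrank_vectorSpan, hF.2.2] using hA

lemma faceGraph_reachable_of_subset_of_sdim_le (hA : IsExposed ℝ P A) (hdim : sdim A ≤ k + 1)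
    {F F' : {F // IsFaceDim P F k}} (hF : F.1 ⊆ A) (hF' : F'.1 ⊆ A) :
    (faceGraph P k).Reachable F F' := by
  obtain rfl | hne := eq_or_ne F F'
  · exact SimpleGraph.Reachable.refl F
  have hkA : ¬ sdim A ≤ k := fun h ↦ hne <| Subtype.ext <|
    (F.2.eq_of_subset hF hA.subset h).trans (F'.2.eq_of_subset hF' hA.subset h).symm
  have hAface : IsFaceDim P A (k + 1) := ⟨hA, F.2.2.1.mono hF, by omega⟩
  exact SimpleGraph.Adj.reachable ⟨hne, Or.inl ⟨A, hAface, hF, hF'⟩⟩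

lemma faceGraph_reachable_of_continuous (hP : IsPolytope P) {T : Type*} [TopologicalSpace T]
    [PreconnectedSpace T] {f : T → EuclideanSpace ℝ (Fin N) →ᵃ[ℝ] ℝ}
    (hcont : ∀ p, Continuous fun t ↦ f t p) (hexp : ∀ t, IsExposed ℝ P (zeroFace P (f t)))
    (hne : ∀ t, (zeroFace P (f t)).Nonempty)
    (hdim : ∀ t, sdim (zeroFace P (f t)) ∈ Icc k (k + 1)) {s t : T} {F F' : {F // IsFaceDim P F k}}
    (hF : F.1 ⊆ zeroFace P (f s)) (hF' : F'.1 ⊆ zeroFace P (f t)) :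
    (faceGraph P k).Reachable F F' := by
  have := hP.finite_faces k
  let C (G : {F // IsFaceDim P F k}) : Set T := {t | G.1 ⊆ zeroFace P (f t)}
  have hCF : (C F).Nonempty := ⟨s, hF⟩
  have hCF' : (C F').Nonempty := ⟨t, hF'⟩
  refine reachable_of_isClosed_cover (fun G ↦ ?_) (fun t ↦ ?_) ?_ hCF hCF'
  · have hC : C G = ⋂ p ∈ G.1, {t | f t p = 0} := by
      ext t
      rw [mem_iInter₂]
      exact ⟨fun h p hp ↦ (h hp).2, fun h p hp ↦ ⟨G.2.1.subset hp, h p hp⟩⟩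
    rw [hC]
    exact isClosed_biInter fun p _ ↦ isClosed_eq (hcont p) continuous_const
  · obtain ⟨G, hG, hGt⟩ := hP.exists_isFaceDim_subset (hexp t) (hne t) (hdim t).1
    exact ⟨⟨G, hG⟩, hGt⟩
  · rintro G G' ⟨t, hG, hG'⟩
    exact faceGraph_reachable_of_subset_of_sdim_le (hexp t) (hdim t).2 hG hG'

lemma faceGraph_reachable_of_tilt (hS : S.Finite) (hμ : ∀ p ∈ convexHull ℝ S, 0 ≤ μ p)
    (hμk : HasAffineRank ℝ (zeroFace (convexHull ℝ S) μ) k)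
    (hne : {p ∈ S | μ p ≠ 0}.Nonempty) {T : Type*} [TopologicalSpace T] [PreconnectedSpace T]
    {g : T → EuclideanSpace ℝ (Fin N) →ᵃ[ℝ] ℝ} (hcont : ∀ p, Continuous fun t ↦ g t p)
    (hg : ∀ t, g t ∈ vanishing (zeroFace (convexHull ℝ S) μ))
    (hdim : ∀ t, sdim (zeroFace (convexHull ℝ S) (tilt S μ (g t))) ≤ k + 1) {s t : T}
    {F F' : {F // IsFaceDim (convexHull ℝ S) F k}}
    (hF : F.1 ⊆ zeroFace (convexHull ℝ S) (tilt S μ (g s)))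
    (hF' : F'.1 ⊆ zeroFace (convexHull ℝ S) (tilt S μ (g t))) :
    (faceGraph (convexHull ℝ S) k).Reachable F F' := by
  have hnonempty (t : T) : (zeroFace (convexHull ℝ S) (tilt S μ (g t))).Nonempty :=
    zeroFace_tilt_nonempty hS hne
  refine faceGraph_reachable_of_continuous ⟨S, hS, rfl⟩ (f := fun t ↦ tilt S μ (g t))
    (continuous_tilt hS hcont) (fun t ↦ isExposed_zeroFace_tilt hS hμ (hg t)) hnonempty
    (fun t ↦ ⟨?_, hdim t⟩) hF hF'
  rw [sdim_eq_finrank_vectorSpan]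
  exact hμk.le_finrank_vectorSpan (hnonempty t) (vanishing_zeroFace_tilt_lt hS hne (hg t))

lemma faceGraph_reachable_of_generic (hS : S.Finite) (hμ : ∀ p ∈ convexHull ℝ S, 0 ≤ μ p)
    (hμk : HasAffineRank ℝ (zeroFace (convexHull ℝ S) μ) k)
    (hf : ∀ p ∈ convexHull ℝ S, 0 ≤ f p)
    (hμf : zeroFace (convexHull ℝ S) μ ⊆ zeroFace (convexHull ℝ S) f)
    (hc : c ∈ vanishing (zeroFace (convexHull ℝ S) μ))
    (hgen : ∀ A, IsExposed ℝ (convexHull ℝ S) A → A.Nonempty → k + 2 ≤ sdim A →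
      c ∉ vanishing A ⊔ Submodule.span ℝ {μ, f})
    {F G : {F // IsFaceDim (convexHull ℝ S) F k}} (hF : zeroFace (convexHull ℝ S) f = F.1)
    (hG : G.1 ⊆ zeroFace (convexHull ℝ S) (tilt S μ c)) :
    (faceGraph (convexHull ℝ S) k).Reachable F G := by
  obtain ⟨q, hqF, hqE⟩ := not_subset.1 (hμk.not_subset F.2.hasAffineRank k.lt_succ_self)
  rw [← hF] at hqF
  have hμq : μ q ≠ 0 := fun h ↦ hqE ⟨hqF.1, h⟩
  have hne := nonempty_sep_ne_zero_of_mem_convexHull hqF.1 hμq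
  let g (t : unitInterval) : EuclideanSpace ℝ (Fin N) →ᵃ[ℝ] ℝ := t.1 • c - (1 - t.1) • f
  have hcont (p) : Continuous fun t ↦ g t p := by
    change Continuous fun t : unitInterval ↦ t.1 * c p - (1 - t.1) * f p
    fun_prop
  have hg (t) : g t ∈ vanishing (zeroFace (convexHull ℝ S) μ) :=
    sub_mem (Submodule.smul_mem _ _ hc)
      (Submodule.smul_mem _ _ (vanishing_anti hμf mem_vanishing_zeroFace))
  have hstart : zeroFace (convexHull ℝ S) (tilt S μ (g 0)) = F.1 := by
    rw [← hF, show g 0 = -f by simp [g], tilt_neg_eq_self hS hμ hf hqF hμq]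
  have hend : g 1 = c := by simp [g]
  have hdim (t) : sdim (zeroFace (convexHull ℝ S) (tilt S μ (g t))) ≤ k + 1 := by
    obtain rfl | ht := eq_or_ne t 0
    · rw [hstart, F.2.2.2]
      exact k.le_succ
    by_contra! hlt
    exact hgen _ (isExposed_zeroFace_tilt hS hμ (hg t)) (zeroFace_tilt_nonempty hS hne) hlt
      (mem_vanishing_zeroFace_tilt_sub_sup (Subtype.coe_ne_coe.2 ht))
  exact faceGraph_reachable_of_tilt hS hμ hμk hne hcont hg hdim hstart.superset (hend ▸ hG)

lemma faceGraph_reachable_of_superset (hP : IsPolytope P) (hE : IsExposed ℝ P E)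
    (hEk : HasAffineRank ℝ E k) {F F' : {F // IsFaceDim P F k}} (hEF : E ⊆ F.1) (hEF' : E ⊆ F'.1) :
    (faceGraph P k).Reachable F F' := by
  have hfin := hP.finite_setOf_isExposed
  obtain ⟨S, hS, rfl⟩ := hP
  obtain ⟨μ, hμ, rfl⟩ := exists_zeroFace_eq_of_isExposed hE
  obtain ⟨f, hf, hfF⟩ := exists_zeroFace_eq_of_isExposed F.2.1
  obtain ⟨f', hf', hfF'⟩ := exists_zeroFace_eq_of_isExposed F'.2.1
  obtain ⟨c, hc, hgen⟩ := hEk.exists_mem_vanishing_forall_notMem_sup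
    (𝓐 := {A | IsExposed ℝ (convexHull ℝ S) A ∧ A.Nonempty ∧ k + 2 ≤ sdim A})
    (𝓑 := {Submodule.span ℝ {μ, f}, Submodule.span ℝ {μ, f'}})
    (hfin.subset fun _ hA ↦ hA.1) (toFinite _) (fun _ hA ↦ hA.2.1) (by
      rintro A ⟨-, -, hA⟩ B hB
      have hB2 : Module.finrank ℝ B ≤ 2 := by
        obtain rfl | rfl := hB <;> exact finrank_span_pair_le _ _
      rw [← sdim_eq_finrank_vectorSpan]
      omega)
  obtain ⟨q, hqF, hqE⟩ := not_subset.1 (hEk.not_subset F.2.hasAffineRank k.lt_succ_self)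
  have hqP := F.2.1.subset hqF
  have hne := nonempty_sep_ne_zero_of_mem_convexHull hqP fun h ↦ hqE ⟨hqP, h⟩
  have hA := zeroFace_tilt_nonempty (g := c) hS hne
  have hk := hEk.le_finrank_vectorSpan hA (vanishing_zeroFace_tilt_lt hS hne hc)
  rw [← sdim_eq_finrank_vectorSpan] at hk
  obtain ⟨G, hG, hGc⟩ := IsPolytope.exists_isFaceDim_subset ⟨S, hS, rfl⟩
    (isExposed_zeroFace_tilt hS hμ hc) hA hk
  have hreach := faceGraph_reachable_of_generic hS hμ hEk hf (hfF ▸ hEF) hc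
    (fun A h₁ h₂ h₃ ↦ hgen A ⟨h₁, h₂, h₃⟩ _ (Or.inl rfl)) hfF (G := ⟨G, hG⟩) hGc
  have hreach' := faceGraph_reachable_of_generic hS hμ hEk hf' (hfF' ▸ hEF') hc
    (fun A h₁ h₂ h₃ ↦ hgen A ⟨h₁, h₂, h₃⟩ _ (Or.inr rfl)) hfF' (G := ⟨G, hG⟩) hGc
  exact hreach.trans hreach'.symm

lemma faceGraph_reachable_succ (hP : IsPolytope P) {E E' : {F // IsFaceDim P F k}}
    (h : (faceGraph P k).Reachable E E') {F F' : {F // IsFaceDim P F (k + 1)}}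
    (hEF : E.1 ⊆ F.1) (hEF' : E'.1 ⊆ F'.1) : (faceGraph P (k + 1)).Reachable F F' := by
  have hpivot (E : {F // IsFaceDim P F k}) {F F' : {F // IsFaceDim P F (k + 1)}}
      (hEF : E.1 ⊆ F.1) (hEF' : E.1 ⊆ F'.1) : (faceGraph P (k + 1)).Reachable F F' :=
    faceGraph_reachable_of_superset hP E.2.1 E.2.hasAffineRank hEF hEF'
  obtain ⟨w⟩ := h
  induction w generalizing F with
  | nil => exact hpivot _ hEF hEF'
  | cons hadj _ ih =>
    obtain ⟨-, ⟨G, hG, hEG, hE₁G⟩ | ⟨G, hG, hE₁G, hEG⟩⟩ := hadj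
    all_goals exact (hpivot _ (F' := ⟨G, hG⟩) hEF hEG).trans (ih hE₁G hEF')

lemma faceGraph_preconnected (hP : IsPolytope P) (k : ℕ) : (faceGraph P k).Preconnected := by
  induction k with
  | zero =>
    exact fun F F' ↦ faceGraph_reachable_of_superset hP isExposed_empty
      hasAffineRank_empty (empty_subset F.1) (empty_subset F'.1)
  | succ k ih =>
    intro F F'
    have hfacet (F : {F // IsFaceDim P F (k + 1)}) : ∃ E, IsFaceDim P E k ∧ E ⊆ F.1 :=
      hP.exists_isFaceDim_subset F.2.1 F.2.2.1 (by rw [F.2.2.2]; exact k.le_succ)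
    obtain ⟨E, hE, hEF⟩ := hfacet F
    obtain ⟨E', hE', hEF'⟩ := hfacet F'
    exact faceGraph_reachable_succ hP (ih ⟨E, hE⟩ ⟨E', hE'⟩) hEF hEF'

end FaceGraph

/-- For every `d`-dimensional convex polytope `P` and every `0 ≤ k ≤ d-1`, the
graph `G_k(P)` is connected. -/
theorem stmt_16 (d k : ℕ) (hk : k < d) {N : ℕ}
    (P : Set (EuclideanSpace ℝ (Fin N))) (hP : IsPolytope P) (hdim : sdim P = d) :
    (faceGraph P k).Connected := by
  have hne : P.Nonempty := by
    by_contra! hempty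
    rw [hempty, sdim_eq_finrank_vectorSpan, vectorSpan_empty, finrank_bot] at hdim
    omega
  obtain ⟨F, hF⟩ := hP.exists_isFaceDim hne (hdim.symm ▸ hk.le)
  have : Nonempty {F // IsFaceDim P F k} := ⟨⟨F, hF⟩⟩
  exact SimpleGraph.Connected.mk (faceGraph_preconnected hP k)
end
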